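/- Let a ≥ 0 and let (q,r) be an a-admissible pair, with conjugate exponents q', r'. There exists a constant C(a,r) > 0 such that for every F ∈ 𝕊⁺, the function T_a^⋆T_a(F)(x,t) = ∫_ℝ ∫₀^∞ S_a(x,y,t−τ) F(y,τ) y^a dy dτ satisfies ‖T_a^⋆T_a(F)‖_{L^q_t L^r_a} ≤ C(a,r) ‖F‖_{L^{q'}_t L^{r'}_a}. -/

import Mathlib

open MeasureTheory Filter Set

noncomputable def besselJ (ν : ℂ) (z : ℝ) : ℂ :=
  ∑' k : ℕ, ((-1 : ℂ) ^ k / (Complex.Gamma (k + 1) * Complex.Gamma (ν + k + 1))) *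
    ((z : ℂ) / 2) ^ (2 * (k : ℂ) + ν)

noncomputable def Skernel (a x y t : ℝ) : ℂ :=
  if 0 < t then
    Complex.exp (-(Complex.I) * (((a + 1) * Real.pi / 4 : ℝ) : ℂ)) *
      (((2 * |t|) ^ (-(a + 1) / 2) : ℝ) : ℂ) *
      (((x * y / (2 * |t|)) ^ ((1 - a) / 2) : ℝ) : ℂ) *
      besselJ (((a - 1) / 2 : ℝ) : ℂ) (x * y / (2 * |t|)) *
      Complex.exp (Complex.I * ((((x ^ 2 + y ^ 2) / (4 * |t|)) : ℝ) : ℂ))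
  else
    Complex.exp ((Complex.I) * (((a + 1) * Real.pi / 4 : ℝ) : ℂ)) *
      (((2 * |t|) ^ (-(a + 1) / 2) : ℝ) : ℂ) *
      (((x * y / (2 * |t|)) ^ ((1 - a) / 2) : ℝ) : ℂ) *
      besselJ (((a - 1) / 2 : ℝ) : ℂ) (x * y / (2 * |t|)) *
      Complex.exp (-(Complex.I) * ((((x ^ 2 + y ^ 2) / (4 * |t|)) : ℝ) : ℂ))

noncomputable def LrA (a r : ℝ) (f : ℝ → ℂ) : ℝ :=
  (∫ x in Ioi (0:ℝ), ‖f x‖ ^ r * x ^ a) ^ (1 / r)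

noncomputable def mixedNorm (a q r : ℝ) (u : ℝ → ℝ → ℂ) : ℝ :=
  (∫ t : ℝ, LrA a r (fun x => u x t) ^ q) ^ (1 / q)

def Admissible (a q r : ℝ) : Prop :=
  2 < r ∧ (1 < a → r < 2 * (a + 1) / (a - 1)) ∧ 2 / q = (a + 1) * (1 / 2 - 1 / r)

noncomputable def DxIter : ℕ → (ℝ → ℝ → ℂ) → (ℝ → ℝ → ℂ)
  | 0, F => F
  | k + 1, F => fun x t => (1 / (x : ℂ)) * deriv (fun x' => DxIter k F x' t) x

noncomputable def DtIter (l : ℕ) (F : ℝ → ℝ → ℂ) : ℝ → ℝ → ℂ :=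
  fun x t => iteratedDeriv l (fun t' => F x t') t

def SPlusT (F : ℝ → ℝ → ℂ) : Prop :=
  ContDiffOn ℝ (⊤ : ℕ∞) (fun p : ℝ × ℝ => F p.1 p.2) (Ioi 0 ×ˢ univ) ∧
  ∀ p : ℕ, ∃ C : ℝ, ∀ k l : ℕ, k + l ≤ p → ∀ x > (0:ℝ), ∀ t : ℝ,
    (1 + x ^ 2 + t ^ 2) ^ ((p : ℝ) / 2) * ‖DxIter k (DtIter l F) x t‖ ≤ C

/-!
Writing the Bessel function as `J_ν(z) = (z/2)^ν B_ν(z²/4)` turns `S_a(·,·,t)` into a unimodular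
multiple of `|t|^(-(a+1)/2) B_{(a-1)/2}(x²y²/(16t²))`. Since `B` is bounded for `a ≥ 0`, the
propagator maps `L¹_a` to `L^∞` with norm `≲ |t|^(-(a+1)/2)`. It is bounded on `L²_a` uniformly in
`t`: termwise integration shows that the Hankel transform of a Gaussian is a Gaussian, so its `L²`
bound is an explicit identity on linear combinations of Gaussians, and these are dense.
Interpolation gives `L^{r'}_a → L^r_a` with norm `≲ |t|^(-2/q)`. By Minkowski's inequality the norm
of `T_a^⋆T_a F` in `x` is then at most a fractional integral of the norm of `F`, and the
Hardy–Littlewood–Sobolev inequality in time concludes, as admissibility forces `2 < q < ∞`.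
-/

open scoped ENNReal NNReal Topology

/-! ### The entire function underlying the Bessel functions -/

/-- The entire function `B_ν(w) = ∑ (-w)^k / (k! Γ(ν+k+1))`, through which the Bessel function is
`J_ν(z) = (z/2)^ν B_ν(z²/4)`. The terms with `Γ` at a pole vanish, as they should, because `Γ` is
`0` there and `x / 0 = 0`. -/
noncomputable def besselEntire (ν w : ℝ) : ℝ :=
  ∑' k : ℕ, (-w) ^ k / (k.factorial * Real.Gamma (ν + k + 1))

lemma inv_Gamma_eq_mul_inv_Gamma_add_one (s : ℝ) :
    (Real.Gamma s)⁻¹ = s * (Real.Gamma (s + 1))⁻¹ := by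
  rcases eq_or_ne s 0 with rfl | hs
  · simp only [Real.Gamma_zero, inv_zero, zero_mul]
  · rw [Real.Gamma_add_one hs, mul_inv, mul_inv_cancel_left₀ hs]

lemma summable_besselEntire (ν w : ℝ) :
    Summable fun k : ℕ => (-w) ^ k / (k.factorial * Real.Gamma (ν + k + 1)) := by
  refine summable_of_ratio_norm_eventually_le (r := 1 / 2) (by norm_num) ?_
  filter_upwards [(tendsto_natCast_atTop_atTop (R := ℝ)).eventually_ge_atTop (2 * |w|),
    (tendsto_natCast_atTop_atTop (R := ℝ)).eventually_ge_atTop (-ν)] with k hkw hkν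
  have hs : 1 ≤ ν + k + 1 := by linarith
  have : (0 : ℝ) < k + 1 := by positivity
  have hratio : (-w) ^ (k + 1) / ((k + 1).factorial * Real.Gamma (ν + (k + 1 : ℕ) + 1)) =
      -w / ((k + 1) * (ν + k + 1)) * ((-w) ^ k / (k.factorial * Real.Gamma (ν + k + 1))) := by
    rw [Nat.factorial_succ, Nat.cast_mul, Nat.cast_add_one, ← add_assoc ν,
      Real.Gamma_add_one (by linarith : ν + k + 1 ≠ 0), pow_succ, div_mul_div_comm]
    ring_nf
  rw [hratio, norm_mul]
  gcongr
  rw [norm_div, norm_neg, Real.norm_eq_abs, Real.norm_of_nonneg (by positivity),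
    div_le_iff₀ (by positivity)]
  nlinarith

lemma besselEntire_deriv_term (ν w : ℝ) (k : ℕ) :
    ((k + 1 : ℕ) : ℝ) * (-w) ^ k * (-1) /
      ((k + 1).factorial * Real.Gamma (ν + (k + 1 : ℕ) + 1)) =
    -((-w) ^ k / (k.factorial * Real.Gamma (ν + 1 + k + 1))) := by
  have hk : (k : ℝ) + 1 ≠ 0 := by positivity
  rw [Nat.factorial_succ, Nat.cast_mul, Nat.cast_add_one,
    show ν + (k + 1) + 1 = ν + 1 + (k : ℝ) + 1 by ring, mul_assoc ((k : ℝ) + 1), mul_assoc,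
    mul_div_mul_left _ _ hk, mul_neg_one, neg_div]

lemma hasDerivAt_besselEntire (ν w : ℝ) :
    HasDerivAt (besselEntire ν) (-besselEntire (ν + 1) w) w := by
  let deriv_term (k : ℕ) (y : ℝ) : ℝ :=
    k * (-y) ^ (k - 1) * (-1) / (k.factorial * Real.Gamma (ν + k + 1))
  have hdsucc (y : ℝ) (k : ℕ) : deriv_term (k + 1) y =
      -((-y) ^ k / (k.factorial * Real.Gamma (ν + 1 + k + 1))) :=
    besselEntire_deriv_term ν y k
  have hsum (y : ℝ) : Summable fun k => deriv_term k y := by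
    rw [← summable_nat_add_iff 1]
    simpa only [hdsucc] using (summable_besselEntire (ν + 1) y).neg
  have hbound (k : ℕ) (y : ℝ) (hy : y ∈ Metric.ball 0 (|w| + 1)) :
      ‖deriv_term k y‖ ≤ ‖deriv_term k (|w| + 1)‖ := by
    have hy' : |y| ≤ |(|w| + 1)| := by
      rw [abs_of_pos (by positivity : 0 < |w| + 1)]
      exact (mem_ball_zero_iff.1 hy).le
    simp only [deriv_term, norm_div, norm_mul, norm_pow, norm_neg, Real.norm_eq_abs]
    gcongr
  have hderiv : HasDerivAt (besselEntire ν) (∑' k, deriv_term k w) w :=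
    hasDerivAt_tsum_of_isPreconnected (hsum (|w| + 1)).norm Metric.isOpen_ball
      (convex_ball _ _).isPreconnected (fun k y _ => ((hasDerivAt_id y).neg.pow k).div_const _)
      hbound (Metric.mem_ball_self (by positivity)) (summable_besselEntire ν 0)
      (by simp)
  refine hderiv.congr_deriv ?_
  rw [(hsum w).tsum_eq_zero_add]
  simp only [hdsucc, tsum_neg]
  simp [deriv_term, besselEntire]

lemma continuous_besselEntire (ν : ℝ) : Continuous (besselEntire ν) :=
  continuous_iff_continuousAt.2 fun w => (hasDerivAt_besselEntire ν w).continuousAt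

lemma besselEntire_zero_right (ν : ℝ) : besselEntire ν 0 = (Real.Gamma (ν + 1))⁻¹ := by
  rw [besselEntire, tsum_eq_single 0 fun k hk => by simp [hk]]
  simp

lemma besselEntire_recurrence (ν w : ℝ) :
    w * besselEntire (ν + 2) w = (ν + 1) * besselEntire (ν + 1) w - besselEntire ν w := by
  have hterm (k : ℕ) : (ν + 1) * ((-w) ^ k / (k.factorial * Real.Gamma (ν + 1 + k + 1))) -
      (-w) ^ k / (k.factorial * Real.Gamma (ν + k + 1)) =
      -(k * (-w) ^ k / (k.factorial * Real.Gamma (ν + 1 + k + 1))) := by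
    have hΓ := inv_Gamma_eq_mul_inv_Gamma_add_one (ν + k + 1)
    rw [show ν + k + 1 + 1 = ν + 1 + (k : ℝ) + 1 by ring] at hΓ
    simp only [div_eq_mul_inv, mul_inv, hΓ]
    ring
  have hshift (k : ℕ) :
      -(((k + 1 : ℕ) : ℝ) * (-w) ^ (k + 1) /
        ((k + 1).factorial * Real.Gamma (ν + 1 + (k + 1 : ℕ) + 1))) =
      w * ((-w) ^ k / (k.factorial * Real.Gamma (ν + 2 + k + 1))) := by
    have hk : (k : ℝ) + 1 ≠ 0 := by positivity
    rw [Nat.factorial_succ, Nat.cast_mul, Nat.cast_add_one,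
      show ν + 1 + (k + 1) + 1 = ν + 2 + (k : ℝ) + 1 by ring, mul_assoc ((k : ℝ) + 1),
      mul_div_mul_left _ _ hk, pow_succ]
    ring
  have hs := summable_besselEntire ν w
  have hs' := (summable_besselEntire (ν + 1) w).mul_left (ν + 1)
  unfold besselEntire
  rw [← tsum_mul_left, ← tsum_mul_left, ← hs'.tsum_sub hs, (hs'.sub hs).tsum_eq_zero_add]
  simp only [hterm, hshift]
  rw [Nat.cast_zero, zero_mul, zero_div, neg_zero, zero_add]

lemma hasDerivAt_besselEntire_energy (ν w : ℝ) :
    HasDerivAt (fun w => besselEntire ν w ^ 2 + w * besselEntire (ν + 1) w ^ 2)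
      (-(2 * ν + 1) * besselEntire (ν + 1) w ^ 2) w := by
  have h := ((hasDerivAt_besselEntire ν w).pow 2).add
    ((hasDerivAt_id w).mul ((hasDerivAt_besselEntire (ν + 1) w).pow 2))
  refine h.congr_deriv ?_
  have hrec := besselEntire_recurrence ν w
  rw [show ν + 1 + 1 = ν + 2 by ring]
  simp only [id, Nat.cast_ofNat, Nat.add_one_sub_one, pow_one, Pi.pow_apply]
  linear_combination (-2 * besselEntire (ν + 1) w) * hrec

lemma abs_besselEntire_le {ν : ℝ} (hν : -1 / 2 ≤ ν) {w : ℝ} (hw : 0 ≤ w) :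
    |besselEntire ν w| ≤ besselEntire ν 0 := by
  have hanti : Antitone fun w => besselEntire ν w ^ 2 + w * besselEntire (ν + 1) w ^ 2 :=
    antitone_of_hasDerivAt_nonpos (hasDerivAt_besselEntire_energy ν) fun w =>
      mul_nonpos_of_nonpos_of_nonneg (by linarith) (sq_nonneg _)
  have henergy : besselEntire ν w ^ 2 + w * besselEntire (ν + 1) w ^ 2 ≤ besselEntire ν 0 ^ 2 := by
    simpa only [zero_mul, add_zero] using hanti hw
  have hpos : 0 ≤ besselEntire ν 0 := by
    rw [besselEntire_zero_right]
    exact inv_nonneg.2 (Real.Gamma_nonneg_of_nonneg (by linarith))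
  exact abs_le_of_sq_le_sq
    ((le_add_of_nonneg_right (mul_nonneg hw (sq_nonneg _))).trans henergy) hpos

lemma besselJ_term_eq (ν : ℝ) {z : ℝ} (hz : 0 < z) (k : ℕ) :
    ((-1 : ℂ) ^ k / (Complex.Gamma (k + 1) * Complex.Gamma ((ν : ℂ) + k + 1))) *
      ((z : ℂ) / 2) ^ (2 * (k : ℂ) + ν) =
    (((z / 2) ^ ν * ((-(z ^ 2 / 4)) ^ k / (k.factorial * Real.Gamma (ν + k + 1))) : ℝ) : ℂ) := by
  have hz2 : 0 < z / 2 := by positivity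
  have hpow : ((z : ℂ) / 2) ^ (2 * (k : ℂ) + ν) = (((z / 2) ^ ν * (z / 2) ^ (2 * k) : ℝ) : ℂ) := by
    rw [show (z : ℂ) / 2 = ((z / 2 : ℝ) : ℂ) by push_cast; rfl,
      show 2 * (k : ℂ) + ν = ((ν + (2 * k : ℕ) : ℝ) : ℂ) by push_cast; ring,
      ← Complex.ofReal_cpow hz2.le, Real.rpow_add hz2, Real.rpow_natCast]
  have hΓ : Complex.Gamma ((ν : ℂ) + k + 1) = (Real.Gamma (ν + k + 1) : ℂ) := by
    rw [← Complex.Gamma_ofReal]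
    push_cast
    rfl
  have hsq : (-(z ^ 2 / 4)) ^ k = (-1) ^ k * (z / 2) ^ (2 * k) := by
    rw [pow_mul, ← mul_pow]
    ring
  rw [hpow, hΓ, Complex.Gamma_nat_eq_factorial, hsq]
  push_cast
  ring

lemma besselJ_eq_besselEntire (ν : ℝ) {z : ℝ} (hz : 0 < z) :
    besselJ (ν : ℂ) z = (((z / 2) ^ ν * besselEntire ν (z ^ 2 / 4) : ℝ) : ℂ) := by
  rw [besselJ, tsum_congr (besselJ_term_eq ν hz), ← Complex.ofReal_tsum, tsum_mul_left,
    besselEntire]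

/-! ### The weighted half-line and the Hankel transform of Gaussians -/

/-- The measure `x^a dx` on `(0,∞)`, whose Lebesgue spaces are the `L^r_a`. -/
noncomputable def weightMeasure (a : ℝ) : Measure ℝ :=
  (volume.restrict (Ioi 0)).withDensity fun x => ((x ^ a).toNNReal : ℝ≥0∞)

instance (a : ℝ) : SigmaFinite (weightMeasure a) := by
  unfold weightMeasure
  infer_instance

lemma ae_weightMeasure_pos (a : ℝ) : ∀ᵐ x ∂weightMeasure a, 0 < x :=
  (withDensity_absolutelyContinuous _ _) (ae_restrict_mem measurableSet_Ioi)

lemma measurable_rpow_toNNReal (a : ℝ) : Measurable fun x : ℝ => (x ^ a).toNNReal :=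
  (measurable_id.pow_const a).real_toNNReal

section Integral

variable {E : Type*} [NormedAddCommGroup E] [NormedSpace ℝ E]

lemma integral_weightMeasure (a : ℝ) (g : ℝ → E) :
    ∫ x, g x ∂weightMeasure a = ∫ x in Ioi (0 : ℝ), x ^ a • g x := by
  rw [weightMeasure, integral_withDensity_eq_integral_smul (measurable_rpow_toNNReal a)]
  refine setIntegral_congr_fun measurableSet_Ioi fun x hx => ?_
  simp only [NNReal.smul_def, Real.coe_toNNReal _ (Real.rpow_nonneg (le_of_lt hx) a)]

lemma integrable_weightMeasure_iff (a : ℝ) (g : ℝ → E) :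
    Integrable g (weightMeasure a) ↔ IntegrableOn (fun x => x ^ a • g x) (Ioi (0 : ℝ)) := by
  rw [weightMeasure, integrable_withDensity_iff_integrable_smul (measurable_rpow_toNNReal a)]
  refine integrableOn_congr_fun (fun x hx => ?_) measurableSet_Ioi
  simp only [NNReal.smul_def, Real.coe_toNNReal _ (Real.rpow_nonneg (le_of_lt hx) a)]

end Integral

lemma rpow_mul_sq_pow_mul_gaussian (a s : ℝ) (k : ℕ) {y : ℝ} (hy : 0 < y) :
    y ^ a * ((y ^ 2) ^ k * Real.exp (-s * y ^ 2)) =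
      y ^ (2 * k + a) * Real.exp (-s * y ^ 2) := by
  rw [Real.rpow_add hy, show (2 : ℝ) * k = ((2 * k : ℕ) : ℝ) by push_cast; rfl,
    Real.rpow_natCast, pow_mul]
  ring

lemma integrable_sq_pow_mul_gaussian {a s : ℝ} (ha : -1 < a) (hs : 0 < s) (k : ℕ) :
    Integrable (fun y => (y ^ 2) ^ k * Real.exp (-s * y ^ 2)) (weightMeasure a) := by
  rw [integrable_weightMeasure_iff]
  refine (integrableOn_rpow_mul_exp_neg_mul_sq hs (s := 2 * k + a) ?_).congr_fun
    (fun y hy => (rpow_mul_sq_pow_mul_gaussian a s k hy).symm) measurableSet_Ioi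
  linarith [Nat.cast_nonneg (α := ℝ) k]

lemma integral_sq_pow_mul_gaussian {a s : ℝ} (ha : -1 < a) (hs : 0 < s) (k : ℕ) :
    ∫ y, (y ^ 2) ^ k * Real.exp (-s * y ^ 2) ∂weightMeasure a =
      s ^ (-((a + 1) / 2)) / 2 * (1 / s) ^ k * Real.Gamma ((a - 1) / 2 + k + 1) := by
  have : (0 : ℝ) ≤ k := Nat.cast_nonneg k
  have hmoment := integral_rpow_mul_exp_neg_mul_rpow (p := 2) (q := 2 * k + a) two_pos
    (by linarith) hs
  simp only [Real.rpow_two] at hmoment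
  rw [integral_weightMeasure, setIntegral_congr_fun measurableSet_Ioi fun y hy =>
      (smul_eq_mul (y ^ a) _).trans (rpow_mul_sq_pow_mul_gaussian a s k hy), hmoment,
    show -(2 * (k : ℝ) + a + 1) / 2 = -((a + 1) / 2) + -(k : ℝ) by ring,
    show (2 * (k : ℝ) + a + 1) / 2 = (a - 1) / 2 + k + 1 by ring,
    Real.rpow_add hs, Real.rpow_neg hs.le (k : ℝ), Real.rpow_natCast, one_div_pow]
  ring

lemma integrable_gaussian {a s : ℝ} (ha : -1 < a) (hs : 0 < s) :
    Integrable (fun y => Real.exp (-s * y ^ 2)) (weightMeasure a) := by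
  simpa only [pow_zero, one_mul] using integrable_sq_pow_mul_gaussian ha hs 0

lemma integral_gaussian_weightMeasure {a s : ℝ} (ha : -1 < a) (hs : 0 < s) :
    ∫ y, Real.exp (-s * y ^ 2) ∂weightMeasure a =
      s ^ (-((a + 1) / 2)) / 2 * Real.Gamma ((a + 1) / 2) := by
  have h := integral_sq_pow_mul_gaussian ha hs 0
  rw [show (a - 1) / 2 + ((0 : ℕ) : ℝ) + 1 = (a + 1) / 2 by rw [Nat.cast_zero]; ring] at h
  simpa only [pow_zero, one_mul, mul_one] using h

/-- Termwise integration of the power series: the Gamma factors cancel and leave the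
exponential series. -/
lemma integral_besselEntire_mul_gaussian {a s : ℝ} (ha : -1 < a) (hs : 0 < s) (c : ℝ) :
    ∫ y, besselEntire ((a - 1) / 2) (c * y ^ 2) * Real.exp (-s * y ^ 2) ∂weightMeasure a =
      s ^ (-((a + 1) / 2)) / 2 * Real.exp (-(c / s)) := by
  have hΓ (k : ℕ) : 0 < Real.Gamma ((a - 1) / 2 + k + 1) :=
    Real.Gamma_pos_of_pos (by linarith [Nat.cast_nonneg (α := ℝ) k])
  let coeff (c : ℝ) (k : ℕ) : ℝ := c ^ k / (k.factorial * Real.Gamma ((a - 1) / 2 + k + 1))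
  let term (k : ℕ) (y : ℝ) : ℝ := coeff (-c) k * ((y ^ 2) ^ k * Real.exp (-s * y ^ 2))
  have hmoment (c : ℝ) (k : ℕ) :
      ∫ y, coeff c k * ((y ^ 2) ^ k * Real.exp (-s * y ^ 2)) ∂weightMeasure a =
        s ^ (-((a + 1) / 2)) / 2 * ((c / s) ^ k / k.factorial) := by
    have hk := (hΓ k).ne'
    rw [integral_const_mul, integral_sq_pow_mul_gaussian ha hs, div_eq_mul_one_div c s, mul_pow]
    simp only [coeff]
    generalize Real.Gamma ((a - 1) / 2 + k + 1) = G at hk ⊢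
    field_simp
  have hnorm (k : ℕ) (y : ℝ) :
      ‖term k y‖ = coeff |c| k * ((y ^ 2) ^ k * Real.exp (-s * y ^ 2)) := by
    have := hΓ k
    simp only [term, coeff]
    rw [norm_mul, norm_div, norm_pow, norm_neg, Real.norm_eq_abs,
      Real.norm_of_nonneg (by positivity), Real.norm_of_nonneg (by positivity)]
  have hsum : HasSum (fun k => ∫ y, term k y ∂weightMeasure a)
      (∫ y, ∑' k, term k y ∂weightMeasure a) :=
    hasSum_integral_of_summable_integral_norm
      (fun k => (integrable_sq_pow_mul_gaussian ha hs k).const_mul _) (by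
        simp only [hnorm, hmoment]
        exact (Real.summable_pow_div_factorial _).mul_left _)
  have hexp : HasSum (fun k => ∫ y, term k y ∂weightMeasure a)
      (s ^ (-((a + 1) / 2)) / 2 * Real.exp (-(c / s))) := by
    simp only [term, hmoment, neg_div]
    rw [Real.exp_eq_exp_ℝ]
    exact (NormedSpace.expSeries_div_hasSum_exp (-(c / s))).mul_left _
  rw [← hsum.unique hexp]
  refine integral_congr_ae (.of_forall fun y => ?_)
  simp only [term, coeff, besselEntire]
  rw [← tsum_mul_right]
  refine tsum_congr fun k => ?_
  rw [← neg_mul, mul_pow]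
  ring

/-- The transform with kernel `B_{(a-1)/2}(b x² y²)` with respect to `y^a dy`: up to powers of
`x` and `y`, the Hankel transform of order `(a-1)/2` at frequency `2 √b`. -/
noncomputable def hankel {E : Type*} [NormedAddCommGroup E] [NormedSpace ℝ E] (a b : ℝ)
    (f : ℝ → E) (x : ℝ) : E :=
  ∫ y, besselEntire ((a - 1) / 2) (b * x ^ 2 * y ^ 2) • f y ∂weightMeasure a

section HankelBasic

variable {E : Type*} [NormedAddCommGroup E] [NormedSpace ℝ E] {a b : ℝ}

lemma continuous_hankel_kernel (a b : ℝ) :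
    Continuous fun p : ℝ × ℝ => besselEntire ((a - 1) / 2) (b * p.1 ^ 2 * p.2 ^ 2) :=
  (continuous_besselEntire _).comp (by fun_prop)

lemma abs_hankel_kernel_le (ha : 0 ≤ a) (hb : 0 ≤ b) (x y : ℝ) :
    |besselEntire ((a - 1) / 2) (b * x ^ 2 * y ^ 2)| ≤ besselEntire ((a - 1) / 2) 0 :=
  abs_besselEntire_le (by linarith) (by positivity)

lemma norm_hankel_integrand_le (ha : 0 ≤ a) (hb : 0 ≤ b) (f : ℝ → E) (x y : ℝ) :
    ‖besselEntire ((a - 1) / 2) (b * x ^ 2 * y ^ 2) • f y‖ ≤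
      besselEntire ((a - 1) / 2) 0 * ‖f y‖ := by
  rw [norm_smul]
  gcongr
  exact abs_hankel_kernel_le ha hb x y

lemma integrable_hankel_integrand (ha : 0 ≤ a) (hb : 0 ≤ b) {f : ℝ → E}
    (hf : Integrable f (weightMeasure a)) (x : ℝ) :
    Integrable (fun y => besselEntire ((a - 1) / 2) (b * x ^ 2 * y ^ 2) • f y)
      (weightMeasure a) :=
  (hf.norm.const_mul _).mono'
    (((continuous_hankel_kernel a b).comp (Continuous.prodMk_right x)).aestronglyMeasurable.smul
      hf.1)
    (.of_forall (norm_hankel_integrand_le ha hb f x))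

lemma continuous_hankel (ha : 0 ≤ a) (hb : 0 ≤ b) {f : ℝ → E}
    (hf : Integrable f (weightMeasure a)) : Continuous (hankel a b f) :=
  continuous_of_dominated (fun x => (integrable_hankel_integrand ha hb hf x).1)
    (fun x => .of_forall (norm_hankel_integrand_le ha hb f x)) (hf.norm.const_mul _)
    (.of_forall fun y =>
      ((continuous_hankel_kernel a b).comp (Continuous.prodMk_left y)).smul continuous_const)

lemma enorm_hankel_sub_le (ha : 0 ≤ a) (hb : 0 ≤ b) {f g : ℝ → E}
    (hf : Integrable f (weightMeasure a)) (hg : Integrable g (weightMeasure a)) (x : ℝ) :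
    ‖hankel a b f x - hankel a b g x‖ₑ ≤
      ENNReal.ofReal (besselEntire ((a - 1) / 2) 0) * eLpNorm (f - g) 1 (weightMeasure a) := by
  rw [hankel, hankel, ← integral_sub (integrable_hankel_integrand ha hb hf x)
    (integrable_hankel_integrand ha hb hg x), eLpNorm_one_eq_lintegral_enorm,
    ← lintegral_const_mul' _ _ ENNReal.ofReal_ne_top]
  refine (enorm_integral_le_lintegral_enorm _).trans (lintegral_mono fun y => ?_)
  rw [← smul_sub, enorm_smul, Real.enorm_eq_ofReal_abs, Pi.sub_apply]
  gcongr
  exact abs_hankel_kernel_le ha hb x y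

lemma hankel_clm_comp [CompleteSpace E] {G : Type*} [NormedAddCommGroup G] [NormedSpace ℝ G]
    [CompleteSpace G] (ha : 0 ≤ a) (hb : 0 ≤ b) (T : E →L[ℝ] G) {f : ℝ → E}
    (hf : Integrable f (weightMeasure a)) (x : ℝ) :
    hankel a b (fun y => T (f y)) x = T (hankel a b f x) := by
  simp only [hankel, ← map_smul]
  exact T.integral_comp_comm (integrable_hankel_integrand ha hb hf x)

end HankelBasic

/-! ### The Plancherel bound for the Hankel transform -/

/-- The finite linear combination `∑ αᵢ e^{-sᵢ y²}` of centred Gaussians. -/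
noncomputable def gaussianSum {ι : Type*} (I : Finset ι) (α s : ι → ℝ) (y : ℝ) : ℝ :=
  ∑ i ∈ I, α i * Real.exp (-s i * y ^ 2)

section GaussianSum

variable {ι : Type*} (I : Finset ι) (α : ι → ℝ) {s : ι → ℝ} {a b : ℝ}

lemma gaussianSum_sq (s : ι → ℝ) (y : ℝ) :
    gaussianSum I α s y ^ 2 =
      ∑ i ∈ I, ∑ j ∈ I, α i * α j * Real.exp (-(s i + s j) * y ^ 2) := by
  rw [gaussianSum, sq, Finset.sum_mul_sum]
  refine Finset.sum_congr rfl fun i _ => Finset.sum_congr rfl fun j _ => ?_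
  rw [neg_add, add_mul, Real.exp_add]
  ring

lemma integrable_gaussianSum (ha : -1 < a) (hs : ∀ i, 0 < s i) :
    Integrable (gaussianSum I α s) (weightMeasure a) :=
  integrable_finsetSum _ fun i _ => (integrable_gaussian ha (hs i)).const_mul _

lemma integrable_gaussianSum_sq (ha : -1 < a) (hs : ∀ i, 0 < s i) :
    Integrable (fun y => gaussianSum I α s y ^ 2) (weightMeasure a) := by
  simp only [gaussianSum_sq]
  exact integrable_finsetSum _ fun i _ => integrable_finsetSum _ fun j _ =>
    (integrable_gaussian ha (add_pos (hs i) (hs j))).const_mul _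

lemma integral_gaussianSum_sq (ha : -1 < a) (hs : ∀ i, 0 < s i) :
    ∫ y, gaussianSum I α s y ^ 2 ∂weightMeasure a =
      ∑ i ∈ I, ∑ j ∈ I,
        α i * α j * ((s i + s j) ^ (-((a + 1) / 2)) / 2 * Real.Gamma ((a + 1) / 2)) := by
  have hint (i j : ι) : Integrable (fun y => α i * α j * Real.exp (-(s i + s j) * y ^ 2))
      (weightMeasure a) :=
    (integrable_gaussian ha (add_pos (hs i) (hs j))).const_mul _
  simp only [gaussianSum_sq]
  rw [integral_finsetSum _ fun i _ => integrable_finsetSum _ fun j _ => hint i j]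
  refine Finset.sum_congr rfl fun i _ => ?_
  rw [integral_finsetSum _ fun j _ => hint i j]
  refine Finset.sum_congr rfl fun j _ => ?_
  rw [integral_const_mul, integral_gaussian_weightMeasure ha (add_pos (hs i) (hs j))]

lemma hankel_gaussianSum (ha : 0 ≤ a) (hb : 0 ≤ b) (hs : ∀ i, 0 < s i) :
    hankel a b (gaussianSum I α s) =
      gaussianSum I (fun i => α i * (s i ^ (-((a + 1) / 2)) / 2)) (fun i => b / s i) := by
  ext x
  have hint (i : ι) := integrable_hankel_integrand ha hb
    ((integrable_gaussian (by linarith : -1 < a) (hs i)).const_mul (α i)) x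
  simp only [smul_eq_mul] at hint
  simp only [hankel, gaussianSum, smul_eq_mul, Finset.mul_sum]
  rw [integral_finsetSum _ fun i _ => hint i]
  refine Finset.sum_congr rfl fun i _ => ?_
  simp only [mul_left_comm _ (α i)]
  rw [integral_const_mul, integral_besselEntire_mul_gaussian (by linarith) (hs i), ← mul_assoc,
    neg_mul, div_mul_eq_mul_div]

lemma integral_hankel_gaussianSum_sq (ha : 0 ≤ a) (hb : 0 < b) (hs : ∀ i, 0 < s i) :
    ∫ x, hankel a b (gaussianSum I α s) x ^ 2 ∂weightMeasure a =
      b ^ (-((a + 1) / 2)) / 4 * ∫ x, gaussianSum I α s x ^ 2 ∂weightMeasure a := by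
  rw [hankel_gaussianSum I α ha hb.le hs,
    integral_gaussianSum_sq _ _ (by linarith) fun i => div_pos hb (hs i),
    integral_gaussianSum_sq _ _ (by linarith) hs, Finset.mul_sum]
  refine Finset.sum_congr rfl fun i _ => ?_
  rw [Finset.mul_sum]
  refine Finset.sum_congr rfl fun j _ => ?_
  have hi := hs i
  have hj := hs j
  have hscale : s i ^ (-((a + 1) / 2)) * s j ^ (-((a + 1) / 2)) *
      (b / s i + b / s j) ^ (-((a + 1) / 2)) =
      b ^ (-((a + 1) / 2)) * (s i + s j) ^ (-((a + 1) / 2)) := by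
    rw [← Real.mul_rpow hi.le hj.le, ← Real.mul_rpow (by positivity) (by positivity),
      ← Real.mul_rpow hb.le (by positivity)]
    congr 1
    field_simp
    ring
  linear_combination (α i * α j / 8 * Real.Gamma ((a + 1) / 2)) * hscale

end GaussianSum

/-- The `L²(x^a dx)` operator norm of `hankel a b`. -/
noncomputable def hankelConst (a b : ℝ) : ℝ :=
  b ^ (-((a + 1) / 4)) / 2

lemma hankelConst_nonneg (a : ℝ) {b : ℝ} (hb : 0 ≤ b) : 0 ≤ hankelConst a b := by
  unfold hankelConst
  positivity

lemma hankelConst_sq (a : ℝ) {b : ℝ} (hb : 0 ≤ b) :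
    hankelConst a b ^ 2 = b ^ (-((a + 1) / 2)) / 4 := by
  rw [hankelConst, div_pow, ← Real.rpow_mul_natCast hb]
  congr 2 <;> norm_num
  ring

lemma eLpNorm_two_sq {X ε : Type*} [MeasurableSpace X] [ENorm ε] (g : X → ε) (μ : Measure X) :
    eLpNorm g 2 μ ^ 2 = ∫⁻ x, ‖g x‖ₑ ^ 2 ∂μ := by
  simpa only [NNReal.coe_ofNat, ENNReal.coe_ofNat, ENNReal.rpow_ofNat] using
    eLpNorm_nnreal_pow_eq_lintegral (f := g) (μ := μ) (p := 2) two_ne_zero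

lemma eLpNorm_two_sq_eq_ofReal_integral {X : Type*} [MeasurableSpace X] {μ : Measure X}
    {g : X → ℝ} (hg : Integrable (fun x => g x ^ 2) μ) :
    eLpNorm g 2 μ ^ 2 = ENNReal.ofReal (∫ x, g x ^ 2 ∂μ) := by
  rw [ofReal_integral_eq_lintegral_ofReal hg (.of_forall fun _ => sq_nonneg _), eLpNorm_two_sq]
  refine lintegral_congr fun x => ?_
  rw [← sq_abs, ENNReal.ofReal_pow (abs_nonneg _), Real.enorm_eq_ofReal_abs]

lemma eLpNorm_hankel_gaussianSum {ι : Type*} (I : Finset ι) (α : ι → ℝ) {s : ι → ℝ} {a b : ℝ}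
    (ha : 0 ≤ a) (hb : 0 < b) (hs : ∀ i, 0 < s i) :
    eLpNorm (hankel a b (gaussianSum I α s)) 2 (weightMeasure a) =
      ENNReal.ofReal (hankelConst a b) * eLpNorm (gaussianSum I α s) 2 (weightMeasure a) := by
  have hint : Integrable (fun x => hankel a b (gaussianSum I α s) x ^ 2) (weightMeasure a) := by
    rw [hankel_gaussianSum I α ha hb.le hs]
    exact integrable_gaussianSum_sq _ _ (by linarith) fun i => div_pos hb (hs i)
  refine (ENNReal.pow_right_strictMono two_ne_zero).injective ?_
  rw [mul_pow,
    eLpNorm_two_sq_eq_ofReal_integral hint,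
    eLpNorm_two_sq_eq_ofReal_integral (integrable_gaussianSum_sq I α (by linarith) hs),
    integral_hankel_gaussianSum_sq I α ha hb hs, ENNReal.ofReal_mul (by positivity),
    ← ENNReal.ofReal_pow (hankelConst_nonneg a hb.le), hankelConst_sq a hb.le]

/-- The finite measure `e^{-x²} x^a dx` on `(0,∞)`. -/
noncomputable def gaussianWeight (a : ℝ) : Measure ℝ :=
  (weightMeasure a).withDensity fun x => ENNReal.ofReal (Real.exp (-x ^ 2))

lemma lintegral_gaussianWeight (a : ℝ) (g : ℝ → ℝ≥0∞) :
    ∫⁻ x, g x ∂gaussianWeight a =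
      ∫⁻ x, ENNReal.ofReal (Real.exp (-x ^ 2)) * g x ∂weightMeasure a := by
  rw [gaussianWeight, lintegral_withDensity_eq_lintegral_mul_non_measurable _ (by fun_prop)
    (.of_forall fun _ => ENNReal.ofReal_lt_top)]
  rfl

lemma exp_neg_sq_le_one (x : ℝ) : Real.exp (-x ^ 2) ≤ 1 :=
  Real.exp_le_one_iff.2 (neg_nonpos.2 (sq_nonneg x))

lemma gaussianWeight_le (a : ℝ) : gaussianWeight a ≤ weightMeasure a := by
  refine Measure.le_iff.2 fun s hs => ?_
  rw [gaussianWeight, withDensity_apply _ hs, ← setLIntegral_one]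
  exact lintegral_mono fun x => ENNReal.ofReal_le_one.2 (exp_neg_sq_le_one x)

lemma isFiniteMeasure_gaussianWeight {a : ℝ} (ha : -1 < a) :
    IsFiniteMeasure (gaussianWeight a) := by
  have h := (integrable_gaussian ha one_pos).lintegral_lt_top
  refine ⟨?_⟩
  rw [← setLIntegral_one, setLIntegral_univ, lintegral_gaussianWeight]
  simpa only [neg_mul, one_mul, mul_one] using h

lemma eLpNorm_one_eq_gaussianWeight (a : ℝ) (f : ℝ → ℝ) :
    eLpNorm f 1 (weightMeasure a) =
      eLpNorm (fun x => Real.exp (x ^ 2) * f x) 1 (gaussianWeight a) := by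
  rw [eLpNorm_one_eq_lintegral_enorm, eLpNorm_one_eq_lintegral_enorm, lintegral_gaussianWeight]
  refine lintegral_congr fun x => ?_
  rw [← Real.enorm_of_nonneg (Real.exp_pos _).le, ← enorm_mul, ← mul_assoc, ← Real.exp_add,
    neg_add_cancel, Real.exp_zero, one_mul]

lemma eLpNorm_two_le_gaussianWeight (a : ℝ) (f : ℝ → ℝ) :
    eLpNorm f 2 (weightMeasure a) ≤
      eLpNorm (fun x => Real.exp (x ^ 2) * f x) 2 (gaussianWeight a) := by
  rw [← ENNReal.pow_le_pow_left_iff two_ne_zero, eLpNorm_two_sq, eLpNorm_two_sq,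
    lintegral_gaussianWeight]
  refine lintegral_mono fun x => ?_
  have hexp : 1 ≤ Real.exp (-x ^ 2) * Real.exp (x ^ 2) ^ 2 := by
    rw [sq (Real.exp _), ← mul_assoc, ← Real.exp_add, neg_add_cancel, Real.exp_zero, one_mul]
    exact Real.one_le_exp (sq_nonneg x)
  rw [enorm_mul, mul_pow, ← mul_assoc, Real.enorm_of_nonneg (Real.exp_pos (x ^ 2)).le,
    ← ENNReal.ofReal_pow (Real.exp_pos _).le, ← ENNReal.ofReal_mul (Real.exp_pos _).le]
  exact le_mul_of_one_le_left' (ENNReal.one_le_ofReal.2 hexp)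

/-- Under the substitution `u = e^{-x²}` a compactly supported function of `x ≥ 0` becomes a
continuous function on the whole line. -/
lemma continuous_comp_sqrt_neg_log {ψ : ℝ → ℝ} (hψ : Continuous ψ) (hc : HasCompactSupport ψ) :
    Continuous fun u : ℝ => if u ≤ 0 then 0 else ψ (√(-Real.log u)) := by
  obtain ⟨R, hR⟩ := hc.isCompact.isBounded.subset_closedBall 0
  have hzero (x : ℝ) (hx : R < x) : ψ x = 0 := by
    by_contra h
    have hmem := hR (subset_tsupport _ h)
    rw [mem_closedBall_zero_iff, Real.norm_eq_abs] at hmem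
    linarith [le_abs_self x]
  refine continuous_iff_continuousAt.2 fun u => ?_
  rcases le_or_gt u 0 with hu | hu
  · refine (continuousAt_const (y := (0 : ℝ))).congr (EventuallyEq.symm ?_)
    filter_upwards [Iio_mem_nhds (hu.trans_lt (Real.exp_pos (-(|R| + 1) ^ 2)))] with v hv
    split_ifs with hv0
    · rfl
    · have hlog : Real.log v < -(|R| + 1) ^ 2 := (Real.log_lt_iff_lt_exp (not_le.1 hv0)).2 hv
      have hsqrt : |R| + 1 ≤ √(-Real.log v) := Real.le_sqrt_of_sq_le (by linarith)
      exact hzero _ (by linarith [le_abs_self R])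
  · refine (hψ.continuousAt.comp (Real.continuous_sqrt.continuousAt.comp
      (Real.continuousAt_log hu.ne').neg)).congr ?_
    filter_upwards [Ioi_mem_nhds hu] with v hv
    exact (if_neg (not_le.2 hv)).symm

lemma exists_polynomial_exp_neg_sq_near {ψ : ℝ → ℝ} (hψ : Continuous ψ)
    (hc : HasCompactSupport ψ) {ε : ℝ} (hε : 0 < ε) :
    ∃ p : Polynomial ℝ, ∀ x, 0 ≤ x → |ψ x - p.eval (Real.exp (-x ^ 2))| ≤ ε := by
  obtain ⟨p, hp⟩ := exists_polynomial_near_of_continuousOn 0 1 _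
    (continuous_comp_sqrt_neg_log hψ hc).continuousOn ε hε
  refine ⟨p, fun x hx => ?_⟩
  have h := hp _ ⟨(Real.exp_pos (-x ^ 2)).le, exp_neg_sq_le_one x⟩
  rw [if_neg (Real.exp_pos _).not_ge, Real.log_exp, neg_neg, Real.sqrt_sq hx, abs_sub_comm] at h
  exact h.le

lemma aestronglyMeasurable_polynomial_exp_neg_sq (p : Polynomial ℝ) (μ : Measure ℝ) :
    AEStronglyMeasurable (fun x => p.eval (Real.exp (-x ^ 2))) μ :=
  (p.continuous.comp (by fun_prop)).aestronglyMeasurable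

lemma exists_polynomial_eLpNorm_gaussianWeight_le {a : ℝ} (ha : -1 < a) {k : ℝ → ℝ}
    (hk : MemLp k 2 (gaussianWeight a)) {ε : ℝ≥0∞} (hε : ε ≠ 0) :
    ∃ p : Polynomial ℝ,
      eLpNorm (fun x => k x - p.eval (Real.exp (-x ^ 2))) 2 (gaussianWeight a) ≤ ε := by
  have := isFiniteMeasure_gaussianWeight ha
  let m : ℝ≥0∞ := gaussianWeight a univ ^ ((2 : ℝ≥0∞).toReal)⁻¹
  have hm : m ≠ ∞ := ENNReal.rpow_ne_top_of_nonneg (by simp) (measure_ne_top _ _)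
  obtain ⟨ψ, hc, hkψ, hψ, hψm⟩ := hk.exists_hasCompactSupport_eLpNorm_sub_le (by simp)
    (ENNReal.half_pos hε).ne'
  obtain ⟨δ, hδ, hmδ⟩ := ENNReal.exists_nnreal_pos_mul_lt hm (ENNReal.half_pos hε).ne'
  obtain ⟨p, hp⟩ := exists_polynomial_exp_neg_sq_near hψ hc (NNReal.coe_pos.2 hδ)
  have hψp : eLpNorm (fun x => ψ x - p.eval (Real.exp (-x ^ 2))) 2 (gaussianWeight a) ≤ ε / 2 := by
    refine (eLpNorm_le_of_ae_bound (C := δ) ?_).trans ?_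
    · filter_upwards [(withDensity_absolutelyContinuous _ _) (ae_weightMeasure_pos a)] with x hx
      exact hp x (le_of_lt hx)
    · rw [ENNReal.ofReal_coe_nnreal, mul_comm]
      exact hmδ.le
  refine ⟨p, ?_⟩
  calc eLpNorm (fun x => k x - p.eval (Real.exp (-x ^ 2))) 2 (gaussianWeight a)
      = eLpNorm ((k - ψ) + fun x => ψ x - p.eval (Real.exp (-x ^ 2))) 2 (gaussianWeight a) := by
        congr 1
        ext x
        simp only [Pi.add_apply, Pi.sub_apply, sub_add_sub_cancel]
    _ ≤ ε / 2 + ε / 2 :=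
        (eLpNorm_add_le (hk.1.sub hψm.1)
          (hψm.1.sub (aestronglyMeasurable_polynomial_exp_neg_sq p _)) (by norm_num)).trans
          (add_le_add hkψ hψp)
    _ = ε := ENNReal.add_halves ε

lemma exp_neg_sq_mul_polynomial_eq_gaussianSum (p : Polynomial ℝ) (y : ℝ) :
    Real.exp (-y ^ 2) * p.eval (Real.exp (-y ^ 2)) =
      gaussianSum (Finset.range (p.natDegree + 1)) p.coeff (fun i => (i : ℝ) + 1) y := by
  rw [Polynomial.eval_eq_sum_range, Finset.mul_sum, gaussianSum]
  refine Finset.sum_congr rfl fun i _ => ?_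
  rw [← Real.exp_nat_mul, mul_left_comm, ← Real.exp_add]
  ring_nf

lemma exists_gaussianSum_near {a : ℝ} (ha : -1 < a) {f : ℝ → ℝ}
    (hf : MemLp (fun x => Real.exp (x ^ 2) * f x) 2 (gaussianWeight a)) {ε : ℝ≥0∞} (hε : ε ≠ 0) :
    ∃ (I : Finset ℕ) (α s : ℕ → ℝ), (∀ i, 0 < s i) ∧
      eLpNorm (f - gaussianSum I α s) 1 (weightMeasure a) ≤ ε ∧
      eLpNorm (f - gaussianSum I α s) 2 (weightMeasure a) ≤ ε := by
  have := isFiniteMeasure_gaussianWeight ha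
  let m : ℝ≥0∞ := gaussianWeight a univ ^ (1 / (1 : ℝ≥0∞).toReal - 1 / (2 : ℝ≥0∞).toReal)
  have hm : m ≠ ∞ := ENNReal.rpow_ne_top_of_nonneg (by norm_num) (measure_ne_top _ _)
  obtain ⟨δ, hδ, hmδ⟩ := ENNReal.exists_nnreal_pos_mul_lt hm hε
  obtain ⟨p, hp⟩ := exists_polynomial_eLpNorm_gaussianWeight_le ha hf
    (ε := min δ ε) (by simp [hδ.ne', hε])
  have hgaussian : (fun x => Real.exp (x ^ 2) * (f - gaussianSum (Finset.range (p.natDegree + 1))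
      p.coeff fun i => (i : ℝ) + 1) x) =
      fun x => Real.exp (x ^ 2) * f x - p.eval (Real.exp (-x ^ 2)) := by
    ext x
    rw [Pi.sub_apply, ← exp_neg_sq_mul_polynomial_eq_gaussianSum, mul_sub, ← mul_assoc,
      ← Real.exp_add, add_neg_cancel, Real.exp_zero, one_mul]
  refine ⟨Finset.range (p.natDegree + 1), p.coeff, fun i => (i : ℝ) + 1,
    fun i => by positivity, ?_, ?_⟩
  · rw [eLpNorm_one_eq_gaussianWeight, hgaussian]
    refine (eLpNorm_le_eLpNorm_mul_rpow_measure_univ one_le_two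
      (hf.1.sub (aestronglyMeasurable_polynomial_exp_neg_sq p _))).trans ?_
    exact (mul_le_mul_left (hp.trans (min_le_left _ _)) _).trans hmδ.le
  · refine (eLpNorm_two_le_gaussianWeight _ _).trans ?_
    rw [hgaussian]
    exact hp.trans (min_le_right _ _)

lemma eLpNorm_le_mul_of_tendsto {X E E' : Type*} [MeasurableSpace X] [NormedAddCommGroup E]
    [NormedAddCommGroup E'] {μ : Measure X} {p c : ℝ≥0∞} (hp : 1 ≤ p) (hc : c ≠ ∞)
    {f : X → E} {F : X → E'} {g : ℕ → X → E} {G : ℕ → X → E'} (hf : AEStronglyMeasurable f μ)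
    (hg : ∀ n, AEStronglyMeasurable (g n) μ) (hG : ∀ n, AEStronglyMeasurable (G n) μ)
    (hgf : Tendsto (fun n => eLpNorm (f - g n) p μ) atTop (𝓝 0))
    (hGF : ∀ x, Tendsto (fun n => G n x) atTop (𝓝 (F x)))
    (hle : ∀ n, eLpNorm (G n) p μ ≤ c * eLpNorm (g n) p μ) :
    eLpNorm F p μ ≤ c * eLpNorm f p μ := by
  have hlim : Tendsto (fun n => c * (eLpNorm f p μ + eLpNorm (f - g n) p μ)) atTop
      (𝓝 (c * (eLpNorm f p μ + 0))) :=
    ENNReal.Tendsto.const_mul (tendsto_const_nhds.add hgf) (.inr hc)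
  rw [add_zero] at hlim
  refine (Lp.eLpNorm_lim_le_liminf_eLpNorm hG F (.of_forall hGF)).trans ?_
  rw [← hlim.liminf_eq]
  refine liminf_le_liminf (.of_forall fun n => (hle n).trans ?_)
  gcongr
  calc eLpNorm (g n) p μ = eLpNorm (f - (f - g n)) p μ := by rw [sub_sub_cancel]
    _ ≤ _ := eLpNorm_sub_le hf (hf.sub (hg n)) hp

lemma eLpNorm_hankel_le_of_tendsto {a b : ℝ} (ha : 0 ≤ a) (hb : 0 ≤ b) {f : ℝ → ℝ}
    (hf : Integrable f (weightMeasure a)) {g : ℕ → ℝ → ℝ}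
    (hg : ∀ n, Integrable (g n) (weightMeasure a))
    (hgf_one : Tendsto (fun n => eLpNorm (f - g n) 1 (weightMeasure a)) atTop (𝓝 0))
    (hgf_two : Tendsto (fun n => eLpNorm (f - g n) 2 (weightMeasure a)) atTop (𝓝 0))
    (hle : ∀ n, eLpNorm (hankel a b (g n)) 2 (weightMeasure a) ≤
      ENNReal.ofReal (hankelConst a b) * eLpNorm (g n) 2 (weightMeasure a)) :
    eLpNorm (hankel a b f) 2 (weightMeasure a) ≤
      ENNReal.ofReal (hankelConst a b) * eLpNorm f 2 (weightMeasure a) := by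
  refine eLpNorm_le_mul_of_tendsto one_le_two ENNReal.ofReal_ne_top hf.1 (fun n => (hg n).1)
    (fun n => (continuous_hankel ha hb (hg n)).aestronglyMeasurable) hgf_two (fun x => ?_) hle
  have hbound := ENNReal.Tendsto.const_mul hgf_one
    (.inr (ENNReal.ofReal_ne_top (r := besselEntire ((a - 1) / 2) 0)))
  rw [mul_zero] at hbound
  refine tendsto_iff_edist_tendsto_0.2 (tendsto_of_tendsto_of_tendsto_of_le_of_le
    tendsto_const_nhds hbound (fun _ => zero_le) fun n => ?_)
  rw [edist_comm, edist_eq_enorm_sub]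
  exact enorm_hankel_sub_le ha hb hf (hg n) x

lemma tendsto_eLpNorm_sub_indicator_Icc {E : Type*} [NormedAddCommGroup E] {μ : Measure ℝ}
    {p : ℝ≥0∞} (hp : p ≠ ∞) {f : ℝ → E} (hf : MemLp f p μ) :
    Tendsto (fun n : ℕ => eLpNorm (f - (Icc (-n : ℝ) n).indicator f) p μ) atTop (𝓝 0) := by
  rcases eq_or_ne p 0 with rfl | hp0
  · simp only [eLpNorm_exponent_zero, tendsto_const_nhds]
  have hpos : 0 < p.toReal := ENNReal.toReal_pos hp0 hp
  have hlim : Tendsto (fun n : ℕ => ∫⁻ x, ‖(f - (Icc (-n : ℝ) n).indicator f) x‖ₑ ^ p.toReal ∂μ)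
      atTop (𝓝 (∫⁻ _, 0 ∂μ)) := by
    refine tendsto_lintegral_of_dominated_convergence' (fun x => ‖f x‖ₑ ^ p.toReal)
      (fun n => ((hf.1.sub (hf.1.indicator measurableSet_Icc)).enorm.pow_const _))
      (fun n => .of_forall fun x => ?_)
      (lintegral_rpow_enorm_lt_top_of_eLpNorm_lt_top hp0 hp hf.2).ne (.of_forall fun x => ?_)
    · rw [← indicator_compl]
      exact ENNReal.rpow_le_rpow (enorm_indicator_le_enorm_self _ _) hpos.le
    · obtain ⟨N, hN⟩ := exists_nat_ge |x|
      refine tendsto_const_nhds.congr' ?_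
      filter_upwards [eventually_ge_atTop N] with n hn
      have hx : x ∈ Icc (-n : ℝ) n := abs_le.1 (hN.trans (Nat.cast_le.2 hn))
      rw [Pi.sub_apply, indicator_of_mem hx, sub_self, enorm_zero, ENNReal.zero_rpow_of_pos hpos]
  rw [lintegral_zero] at hlim
  simp only [eLpNorm_eq_lintegral_rpow_enorm_toReal hp0 hp]
  have h := hlim.ennrpow_const (1 / p.toReal)
  rwa [ENNReal.zero_rpow_of_pos (one_div_pos.2 hpos)] at h

lemma memLp_exp_sq_mul_indicator_Icc {a R : ℝ} {f : ℝ → ℝ} (hf : MemLp f 2 (weightMeasure a)) :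
    MemLp (fun x => Real.exp (x ^ 2) * (Icc (-R) R).indicator f x) 2 (gaussianWeight a) := by
  have hf' := hf.mono_measure (gaussianWeight_le a)
  refine MemLp.of_le_mul (c := Real.exp (R ^ 2)) hf'
    ((by fun_prop : Continuous fun x : ℝ => Real.exp (x ^ 2)).aestronglyMeasurable.mul
      (hf'.1.indicator measurableSet_Icc)) (.of_forall fun x => ?_)
  rw [norm_mul, Real.norm_of_nonneg (Real.exp_pos _).le]
  by_cases hx : x ∈ Icc (-R) R
  · rw [indicator_of_mem hx]
    exact mul_le_mul_of_nonneg_right (Real.exp_le_exp.2 (sq_le_sq' hx.1 hx.2)) (norm_nonneg _)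
  · rw [indicator_of_notMem hx, norm_zero, mul_zero]
    positivity

lemma eLpNorm_hankel_le_of_memLp_gaussianWeight {a b : ℝ} (ha : 0 ≤ a) (hb : 0 < b) {f : ℝ → ℝ}
    (hf : Integrable f (weightMeasure a))
    (hf' : MemLp (fun x => Real.exp (x ^ 2) * f x) 2 (gaussianWeight a)) :
    eLpNorm (hankel a b f) 2 (weightMeasure a) ≤
      ENNReal.ofReal (hankelConst a b) * eLpNorm f 2 (weightMeasure a) := by
  have hε : Tendsto (fun n : ℕ => ((n : ℝ≥0∞) + 1)⁻¹) atTop (𝓝 0) := by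
    simpa only [Function.comp_def, Nat.cast_add, Nat.cast_one] using
      ENNReal.tendsto_inv_nat_nhds_zero.comp (tendsto_add_atTop_nat 1)
  have happrox (n : ℕ) := exists_gaussianSum_near (by linarith) hf'
    (ENNReal.inv_ne_zero.2 (by simp) : ((n : ℝ≥0∞) + 1)⁻¹ ≠ 0)
  choose I α s hs hone htwo using happrox
  exact eLpNorm_hankel_le_of_tendsto ha hb.le hf
    (fun n => integrable_gaussianSum _ _ (by linarith) (hs n))
    (tendsto_of_tendsto_of_tendsto_of_le_of_le tendsto_const_nhds hε (fun _ => zero_le) hone)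
    (tendsto_of_tendsto_of_tendsto_of_le_of_le tendsto_const_nhds hε (fun _ => zero_le) htwo)
    (fun n => (eLpNorm_hankel_gaussianSum _ _ ha hb (hs n)).le)

lemma eLpNorm_hankel_le_real {a b : ℝ} (ha : 0 ≤ a) (hb : 0 < b) {f : ℝ → ℝ}
    (hf : Integrable f (weightMeasure a)) (hf' : MemLp f 2 (weightMeasure a)) :
    eLpNorm (hankel a b f) 2 (weightMeasure a) ≤
      ENNReal.ofReal (hankelConst a b) * eLpNorm f 2 (weightMeasure a) := by
  have hint (n : ℕ) := hf.indicator (measurableSet_Icc (a := (-n : ℝ)) (b := n))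
  refine eLpNorm_hankel_le_of_tendsto ha hb.le hf hint
    (tendsto_eLpNorm_sub_indicator_Icc ENNReal.one_ne_top (memLp_one_iff_integrable.2 hf))
    (tendsto_eLpNorm_sub_indicator_Icc ENNReal.ofNat_ne_top hf') (fun n => ?_)
  exact eLpNorm_hankel_le_of_memLp_gaussianWeight ha hb (hint n)
    (memLp_exp_sq_mul_indicator_Icc hf')

lemma eLpNorm_two_sq_eq_re_add_im {X : Type*} [MeasurableSpace X] {μ : Measure X} {f : X → ℂ}
    (hf : AEStronglyMeasurable f μ) :
    eLpNorm f 2 μ ^ 2 =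
      eLpNorm (fun x => (f x).re) 2 μ ^ 2 + eLpNorm (fun x => (f x).im) 2 μ ^ 2 := by
  rw [eLpNorm_two_sq, eLpNorm_two_sq, eLpNorm_two_sq,
    ← lintegral_add_left'
      ((Complex.continuous_re.comp_aestronglyMeasurable hf).enorm.pow_const _)]
  refine lintegral_congr fun x => ?_
  rw [← ofReal_norm, ← ofReal_norm, ← ofReal_norm, ← ENNReal.ofReal_pow (norm_nonneg _),
    ← ENNReal.ofReal_pow (norm_nonneg _), ← ENNReal.ofReal_pow (norm_nonneg _),
    ← ENNReal.ofReal_add (sq_nonneg _) (sq_nonneg _), Complex.sq_norm, Complex.normSq_apply,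
    Real.norm_eq_abs, Real.norm_eq_abs, sq_abs, sq_abs, sq, sq]

theorem eLpNorm_hankel_le {a b : ℝ} (ha : 0 ≤ a) (hb : 0 < b) {f : ℝ → ℂ}
    (hf : Integrable f (weightMeasure a)) (hf' : MemLp f 2 (weightMeasure a)) :
    eLpNorm (hankel a b f) 2 (weightMeasure a) ≤
      ENNReal.ofReal (hankelConst a b) * eLpNorm f 2 (weightMeasure a) := by
  have hre := eLpNorm_hankel_le_real ha hb hf.re hf'.re
  have him := eLpNorm_hankel_le_real ha hb hf.im hf'.im
  have hre_comp := hankel_clm_comp ha hb.le Complex.reCLM hf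
  have him_comp := hankel_clm_comp ha hb.le Complex.imCLM hf
  simp only [Complex.reCLM_apply, Complex.imCLM_apply] at hre_comp him_comp
  rw [← ENNReal.pow_le_pow_left_iff two_ne_zero, mul_pow, eLpNorm_two_sq_eq_re_add_im hf.1,
    eLpNorm_two_sq_eq_re_add_im (continuous_hankel ha hb.le hf).aestronglyMeasurable, mul_add,
    ← mul_pow, ← mul_pow]
  simp only [← hre_comp, ← him_comp]
  gcongr
  · exact hre
  · exact him

/-! ### Layer-cake comparison and Minkowski's integral inequality -/

lemma lintegral_Ioi_rpow_eq_top (s : ℝ) : ∫⁻ l in Ioi (0 : ℝ), ENNReal.ofReal (l ^ s) = ∞ := by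
  by_contra h
  refine not_integrableOn_Ioi_rpow s ⟨(by fun_prop : Measurable _).aestronglyMeasurable, ?_⟩
  refine (hasFiniteIntegral_iff_ofReal ?_).2 (lt_top_iff_ne_top.2 h)
  filter_upwards [ae_restrict_mem measurableSet_Ioi] with l hl
  exact Real.rpow_nonneg hl.le s

lemma lintegral_rpow_eq_lintegral_measure_lt {X : Type*} [MeasurableSpace X] {μ : Measure X}
    {G : X → ℝ≥0∞} (hG : AEMeasurable G μ) {s : ℝ} (hs : 0 < s) :
    ∫⁻ x, G x ^ s ∂μ = ENNReal.ofReal s *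
      ∫⁻ l in Ioi (0 : ℝ), μ {x | ENNReal.ofReal l < G x} * ENNReal.ofReal (l ^ (s - 1)) := by
  have hs' : ENNReal.ofReal s ≠ 0 := (ENNReal.ofReal_pos.2 hs).ne'
  by_cases hfin : ∀ᵐ x ∂μ, G x ≠ ∞
  · have h := lintegral_rpow_eq_lintegral_meas_lt_mul μ
      (.of_forall fun x => ENNReal.toReal_nonneg) hG.ennreal_toReal hs
    calc ∫⁻ x, G x ^ s ∂μ = ∫⁻ x, ENNReal.ofReal ((G x).toReal ^ s) ∂μ := by
          refine lintegral_congr_ae (hfin.mono fun x hx => ?_)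
          beta_reduce
          rw [← ENNReal.ofReal_rpow_of_nonneg ENNReal.toReal_nonneg hs.le, ENNReal.ofReal_toReal hx]
      _ = _ := h
      _ = _ := by
          congr 1
          refine setLIntegral_congr_fun measurableSet_Ioi fun l (hl : 0 < l) => ?_
          congr 1
          refine measure_congr (hfin.mono fun x hx => propext ?_)
          exact (ENNReal.ofReal_lt_iff_lt_toReal hl.le hx).symm
  · have hpos : μ {x | G x = ∞} ≠ 0 := by simpa only [ae_iff, not_not] using hfin
    have hleft : ∫⁻ x, G x ^ s ∂μ = ∞ := by
      by_contra h
      refine hfin ((ae_lt_top' (hG.pow_const s) h).mono fun x hx hGx => ?_)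
      rw [hGx, ENNReal.top_rpow_of_pos hs] at hx
      exact hx.ne rfl
    have hright : ∞ ≤ ∫⁻ l in Ioi (0 : ℝ),
        μ {x | ENNReal.ofReal l < G x} * ENNReal.ofReal (l ^ (s - 1)) := by
      calc ∞ = μ {x | G x = ∞} * ∫⁻ l in Ioi (0 : ℝ), ENNReal.ofReal (l ^ (s - 1)) := by
            rw [lintegral_Ioi_rpow_eq_top, ENNReal.mul_top hpos]
        _ = ∫⁻ l in Ioi (0 : ℝ), μ {x | G x = ∞} * ENNReal.ofReal (l ^ (s - 1)) :=
            (lintegral_const_mul _ (by fun_prop)).symm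
        _ ≤ _ := lintegral_mono fun l => mul_le_mul_left (measure_mono fun x (hx : G x = ∞) =>
            ENNReal.ofReal_lt_top.trans_eq hx.symm) _
    rw [hleft, top_le_iff.1 hright, ENNReal.mul_top hs']

lemma lintegral_rpow_le_of_measure_lt_le {X Y : Type*} [MeasurableSpace X] [MeasurableSpace Y]
    {μ : Measure X} {ν : Measure Y} {G : X → ℝ≥0∞} {H : Y → ℝ≥0∞} (hG : AEMeasurable G μ)
    (hH : AEMeasurable H ν) {K : ℝ≥0∞} (hK : K ≠ ∞) {s β : ℝ} (hs : 0 < s) (hsβ : 0 < s + β)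
    (h : ∀ l : ℝ, 0 < l → μ {x | ENNReal.ofReal l < G x} ≤
      K * ENNReal.ofReal (l ^ β) * ν {y | ENNReal.ofReal l < H y}) :
    ∫⁻ x, G x ^ s ∂μ ≤ K * ENNReal.ofReal (s / (s + β)) * ∫⁻ y, H y ^ (s + β) ∂ν := by
  rw [lintegral_rpow_eq_lintegral_measure_lt hG hs, lintegral_rpow_eq_lintegral_measure_lt hH hsβ]
  calc ENNReal.ofReal s *
        ∫⁻ l in Ioi (0 : ℝ), μ {x | ENNReal.ofReal l < G x} * ENNReal.ofReal (l ^ (s - 1))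
      ≤ ENNReal.ofReal s * ∫⁻ l in Ioi (0 : ℝ),
          K * (ν {y | ENNReal.ofReal l < H y} * ENNReal.ofReal (l ^ (s + β - 1))) := by
        gcongr 1
        refine setLIntegral_mono' measurableSet_Ioi fun l (hl : 0 < l) => ?_
        rw [show s + β - 1 = β + (s - 1) by ring, Real.rpow_add hl,
          ENNReal.ofReal_mul (by positivity)]
        refine (mul_le_mul_left (h l hl) _).trans (le_of_eq ?_)
        ring
    _ = K * ENNReal.ofReal (s / (s + β)) * (ENNReal.ofReal (s + β) * ∫⁻ l in Ioi (0 : ℝ),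
          ν {y | ENNReal.ofReal l < H y} * ENNReal.ofReal (l ^ (s + β - 1))) := by
        rw [lintegral_const_mul' _ _ hK, mul_assoc K, ← mul_assoc (ENNReal.ofReal (s / (s + β))),
          ← ENNReal.ofReal_mul (by positivity), div_mul_cancel₀ _ hsβ.ne', mul_left_comm]

section Minkowski

variable {X Y : Type*} [MeasurableSpace X] [MeasurableSpace Y] {μ : Measure X} {ν : Measure Y}
  [SFinite μ] [SFinite ν] {g : X → Y → ℝ≥0∞} {r : ℝ}

lemma lintegral_rpow_le_mul_of_le_lintegral (hg : Measurable (Function.uncurry g)) (hr : 1 < r)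
    {H : X → ℝ≥0∞} (hH : Measurable H) (hHg : ∀ x, H x ≤ ∫⁻ y, g x y ∂ν)
    (hfin : ∫⁻ x, H x ^ r ∂μ ≠ ∞) :
    ∫⁻ x, H x ^ r ∂μ ≤
      (∫⁻ y, (∫⁻ x, g x y ^ r ∂μ) ^ (1 / r) ∂ν) * (∫⁻ x, H x ^ r ∂μ) ^ (1 - 1 / r) := by
  have hr1 : r - 1 ≠ 0 := by linarith
  have hexp : 1 / (r / (r - 1)) = 1 - 1 / r := by field_simp
  have hnonneg : 0 ≤ 1 - 1 / r := sub_nonneg.2 ((div_le_one (by linarith)).2 hr.le)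
  calc ∫⁻ x, H x ^ r ∂μ = ∫⁻ x, H x ^ (r - 1) * H x ∂μ := by
        refine lintegral_congr fun x => ?_
        nth_rewrite 3 [← ENNReal.rpow_one (H x)]
        rw [← ENNReal.rpow_add_of_nonneg _ _ (by linarith) zero_le_one, sub_add_cancel]
    _ ≤ ∫⁻ x, H x ^ (r - 1) * ∫⁻ y, g x y ∂ν ∂μ := by gcongr with x; exact hHg x
    _ = ∫⁻ x, ∫⁻ y, H x ^ (r - 1) * g x y ∂ν ∂μ :=
        lintegral_congr fun x => (lintegral_const_mul _ (hg.comp measurable_prodMk_left)).symm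
    _ = ∫⁻ y, ∫⁻ x, H x ^ (r - 1) * g x y ∂μ ∂ν := lintegral_lintegral_swap
        (((hH.comp measurable_fst).pow_const _).mul hg).aemeasurable
    _ ≤ ∫⁻ y, (∫⁻ x, g x y ^ r ∂μ) ^ (1 / r) * (∫⁻ x, H x ^ r ∂μ) ^ (1 - 1 / r) ∂ν := by
        refine lintegral_mono fun y => ?_
        have hholder := ENNReal.lintegral_mul_le_Lp_mul_Lq μ
          (Real.HolderConjugate.conjExponent hr).symm (f := fun x => H x ^ (r - 1))
          (g := fun x => g x y) (hH.pow_const _).aemeasurable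
          (hg.comp measurable_prodMk_right).aemeasurable
        simp only [Pi.mul_apply, ← ENNReal.rpow_mul, Real.conjExponent, mul_div_cancel₀ r hr1,
          hexp] at hholder
        rwa [mul_comm] at hholder
    _ = _ := lintegral_mul_const' _ _ (ENNReal.rpow_ne_top_of_nonneg hnonneg hfin)

lemma lintegral_rpow_rpow_inv_le_of_le_lintegral (hg : Measurable (Function.uncurry g))
    (hr : 1 < r) {H : X → ℝ≥0∞} (hH : Measurable H) (hHg : ∀ x, H x ≤ ∫⁻ y, g x y ∂ν)
    (hfin : ∫⁻ x, H x ^ r ∂μ ≠ ∞) :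
    (∫⁻ x, H x ^ r ∂μ) ^ (1 / r) ≤ ∫⁻ y, (∫⁻ x, g x y ^ r ∂μ) ^ (1 / r) ∂ν := by
  have h := lintegral_rpow_le_mul_of_le_lintegral hg hr hH hHg hfin
  set I := ∫⁻ x, H x ^ r ∂μ
  rcases eq_or_ne I 0 with hI | hI
  · rw [hI, ENNReal.zero_rpow_of_pos (by positivity)]
    exact zero_le
  have hI0 : I ^ (1 - 1 / r) ≠ 0 := (ENNReal.rpow_pos (pos_iff_ne_zero.2 hI) hfin).ne'
  have hItop : I ^ (1 - 1 / r) ≠ ∞ := ENNReal.rpow_ne_top_of_ne_zero hI hfin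
  refine (ENNReal.mul_le_mul_iff_left hI0 hItop).1 ?_
  rwa [← ENNReal.rpow_add _ _ hI hfin, add_sub_cancel, ENNReal.rpow_one]

end Minkowski

lemma exists_seq_lintegral_rpow_ne_top {X : Type*} [MeasurableSpace X] (μ : Measure X)
    [SigmaFinite μ] {G : X → ℝ≥0∞} (hG : Measurable G) {r : ℝ} (hr : 0 < r) :
    ∃ H : ℕ → X → ℝ≥0∞, (∀ n, Measurable (H n)) ∧ (∀ n x, H n x ≤ G x) ∧
      (∀ n, ∫⁻ x, H n x ^ r ∂μ ≠ ∞) ∧ ∀ x, Tendsto (fun n => H n x) atTop (𝓝 (G x)) := by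
  refine ⟨fun n => (spanningSets μ n).indicator fun x => min (G x) n,
    fun n => (hG.min measurable_const).indicator (measurableSet_spanningSets μ n),
    fun n x => (indicator_le_self' (fun _ _ => zero_le) x).trans (min_le_left _ _),
    fun n => ne_of_lt ?_, fun x => ?_⟩
  · calc ∫⁻ x, (spanningSets μ n).indicator (fun x => min (G x) n) x ^ r ∂μ
        ≤ ∫⁻ x, (spanningSets μ n).indicator (fun _ => (n : ℝ≥0∞) ^ r) x ∂μ := by
          refine lintegral_mono fun x => ?_
          simp only [indicator]
          split_ifs
          · exact ENNReal.rpow_le_rpow (min_le_right _ _) hr.le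
          · rw [ENNReal.zero_rpow_of_pos hr]
      _ = (n : ℝ≥0∞) ^ r * μ (spanningSets μ n) :=
          lintegral_indicator_const (measurableSet_spanningSets μ n) _
      _ < ∞ := ENNReal.mul_lt_top
          (ENNReal.rpow_lt_top_of_nonneg hr.le (ENNReal.natCast_ne_top n))
          (measure_spanningSets_lt_top μ n)
  · have hmin : Tendsto (fun n : ℕ => min (G x) (n : ℝ≥0∞)) atTop (𝓝 (min (G x) ∞)) :=
      tendsto_const_nhds.min ENNReal.tendsto_nat_nhds_top
    rw [min_top_right] at hmin
    obtain ⟨N, hN⟩ := mem_iUnion.1 ((iUnion_spanningSets μ).symm ▸ mem_univ x)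
    refine hmin.congr' ?_
    filter_upwards [eventually_ge_atTop N] with n hn
    rw [indicator_of_mem (monotone_spanningSets μ hn hN)]

theorem eLpNorm'_lintegral_le {X Y : Type*} [MeasurableSpace X] [MeasurableSpace Y]
    {μ : Measure X} [SigmaFinite μ] {ν : Measure Y} [SFinite ν] {g : X → Y → ℝ≥0∞}
    (hg : Measurable (Function.uncurry g)) {r : ℝ} (hr : 1 < r) :
    eLpNorm' (fun x => ∫⁻ y, g x y ∂ν) r μ ≤ ∫⁻ y, eLpNorm' (fun x => g x y) r μ ∂ν := by
  obtain ⟨H, hHm, hHg, hfin, hlim⟩ :=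
    exists_seq_lintegral_rpow_ne_top μ (hg.lintegral_prod_right' (ν := ν)) (zero_lt_one.trans hr)
  have hle (n : ℕ) := lintegral_rpow_rpow_inv_le_of_le_lintegral hg hr (hHm n) (hHg n) (hfin n)
  simp only [eLpNorm'_eq_lintegral_enorm, enorm_eq_self, one_div,
    ENNReal.rpow_inv_le_iff (zero_lt_one.trans hr)] at hle ⊢
  calc ∫⁻ x, (∫⁻ y, g x y ∂ν) ^ r ∂μ
      = ∫⁻ x, liminf (fun n => H n x ^ r) atTop ∂μ :=
        lintegral_congr fun x => ((hlim x).ennrpow_const r).liminf_eq.symm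
    _ ≤ liminf (fun n => ∫⁻ x, H n x ^ r ∂μ) atTop :=
        lintegral_liminf_le fun n => (hHm n).pow_const _
    _ ≤ liminf (fun _ : ℕ => (∫⁻ y, (∫⁻ x, g x y ^ r ∂μ) ^ r⁻¹ ∂ν) ^ r) atTop :=
        liminf_le_liminf (.of_forall hle)
    _ = _ := liminf_const _

/-! ### Interpolation between `L¹ → L^∞` and `L² → L²` -/

lemma enorm_integral_kernel_le {X Y 𝕜 : Type*} [RCLike 𝕜] [MeasurableSpace Y] {ν : Measure Y}
    {k : X → Y → 𝕜} {A : ℝ≥0} (hkA : ∀ x y, ‖k x y‖ₑ ≤ A) (g : Y → 𝕜) (x : X) :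
    ‖∫ y, k x y * g y ∂ν‖ₑ ≤ A * ∫⁻ y, ‖g y‖ₑ ∂ν := by
  refine (enorm_integral_le_lintegral_enorm _).trans ?_
  rw [← lintegral_const_mul' _ _ ENNReal.coe_ne_top]
  refine lintegral_mono fun y => ?_
  rw [enorm_mul]
  exact mul_le_mul_left (hkA x y) _

lemma sq_mul_div_rpow {r : ℝ} (hr : 2 < r) (c : ℝ≥0∞) {x : ℝ≥0∞} (hx : x ≠ ∞) :
    x ^ 2 * (c / x ^ (1 / (r - 1))) ^ (r - 2) = c ^ (r - 2) * x ^ (r / (r - 1)) := by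
  have hr1 : 0 < r - 1 := by linarith
  rcases eq_or_ne x 0 with rfl | hx0
  · rw [zero_pow two_ne_zero, zero_mul,
      ENNReal.zero_rpow_of_pos (div_pos (by linarith : 0 < r) hr1), mul_zero]
  · have hexp : 2 - 1 / (r - 1) * (r - 2) = r / (r - 1) := by field_simp; ring
    rw [ENNReal.div_rpow_of_nonneg _ _ (by linarith), ← ENNReal.rpow_mul, ← hexp,
      ENNReal.rpow_sub _ _ hx0 hx, ENNReal.rpow_two]
    simp only [div_eq_mul_inv]
    ring

section Interpolation

variable {X Y 𝕜 : Type*} [RCLike 𝕜] [MeasurableSpace Y] [MeasurableSpace X] {μ : Measure X}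
  {ν : Measure Y} {k : X → Y → 𝕜} {A : ℝ≥0} {M : ℝ≥0∞}

lemma integrable_kernel_mul (hk : StronglyMeasurable (Function.uncurry k))
    (hkA : ∀ x y, ‖k x y‖ₑ ≤ A) {g : Y → 𝕜} (hg : Integrable g ν) (x : X) :
    Integrable (fun y => k x y * g y) ν :=
  hg.bdd_mul (c := A) (hk.comp_measurable measurable_prodMk_left).aestronglyMeasurable
    (.of_forall fun y => enorm_le_coe.1 (hkA x y))

/-- The height at which `f` is cut depends on the level `l` so that the low part of `f`, mapped to
`L^∞` with norm `A`, contributes at most `l / 2`. -/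
lemma mul_setLIntegral_enorm_le {f : Y → 𝕜} (hf : StronglyMeasurable f) {s : ℝ} (hs : 0 ≤ s)
    (hN : ∫⁻ y, ‖f y‖ₑ ^ (s + 1) ∂ν ≠ ∞) {l : ℝ≥0∞} (hl0 : l ≠ 0) (hl : l ≠ ∞) :
    A * ∫⁻ y in {y | l < 2 * A * (∫⁻ y, ‖f y‖ₑ ^ (s + 1) ∂ν) / ‖f y‖ₑ ^ s}ᶜ, ‖f y‖ₑ ∂ν ≤
      l / 2 := by
  set N := ∫⁻ y, ‖f y‖ₑ ^ (s + 1) ∂ν with hN_def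
  have hs1 : 0 < s + 1 := by linarith
  have hmeas : Measurable fun y => ‖f y‖ₑ := hf.measurable.enorm
  set S := {y | l < 2 * A * N / ‖f y‖ₑ ^ s}
  have hS : MeasurableSet S := measurableSet_lt measurable_const
    (measurable_const.div (hmeas.pow_const s))
  rcases eq_or_ne N 0 with hN0 | hN0
  · have hzero : ∀ᵐ y ∂ν, ‖f y‖ₑ = 0 := by
      refine ((lintegral_eq_zero_iff (hmeas.pow_const _)).1 (hN_def ▸ hN0)).mono fun y hy => ?_
      exact (ENNReal.rpow_eq_zero_iff_of_pos hs1).1 hy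
    rw [lintegral_congr_ae (ae_restrict_of_ae hzero), lintegral_zero, mul_zero]
    exact zero_le
  have hpoint (y : Y) (hy : y ∈ Sᶜ) : 2 * A * N * ‖f y‖ₑ ≤ l * ‖f y‖ₑ ^ (s + 1) := by
    rw [ENNReal.rpow_add_of_nonneg _ _ hs zero_le_one, ENNReal.rpow_one, ← mul_assoc]
    exact mul_le_mul_left ((ENNReal.div_le_iff_le_mul (.inr hl) (.inr hl0)).1 (not_lt.1 hy)) _
  rw [ENNReal.le_div_iff_mul_le (by simp) (by simp)]
  refine (ENNReal.mul_le_mul_iff_left hN0 hN).1 ?_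
  calc A * (∫⁻ y in Sᶜ, ‖f y‖ₑ ∂ν) * 2 * N = ∫⁻ y in Sᶜ, 2 * A * N * ‖f y‖ₑ ∂ν := by
        rw [lintegral_const_mul _ hmeas]
        ring
    _ ≤ ∫⁻ y in Sᶜ, l * ‖f y‖ₑ ^ (s + 1) ∂ν := setLIntegral_mono' hS.compl hpoint
    _ ≤ ∫⁻ y, l * ‖f y‖ₑ ^ (s + 1) ∂ν := setLIntegral_le_lintegral _ _
    _ = l * N := lintegral_const_mul _ (hmeas.pow_const _)

variable [SFinite ν]

lemma stronglyMeasurable_integral_kernel (hk : StronglyMeasurable (Function.uncurry k))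
    {g : Y → 𝕜} (hg : StronglyMeasurable g) :
    StronglyMeasurable fun x => ∫ y, k x y * g y ∂ν :=
  StronglyMeasurable.integral_prod_right' (f := fun z : X × Y => k z.1 z.2 * g z.2)
    (hk.mul (hg.comp_measurable measurable_snd))

lemma measure_lt_enorm_integral_kernel_le (hk : StronglyMeasurable (Function.uncurry k))
    (hkA : ∀ x y, ‖k x y‖ₑ ≤ A)
    (hL2 : ∀ g : Y → 𝕜, StronglyMeasurable g → Integrable g ν →
      eLpNorm (fun x => ∫ y, k x y * g y ∂ν) 2 μ ≤ M * eLpNorm g 2 ν)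
    {f : Y → 𝕜} (hf : StronglyMeasurable f) (hfi : Integrable f ν) {S : Set Y}
    (hS : MeasurableSet S) {l : ℝ≥0∞} (hl0 : l ≠ 0) (hl : l ≠ ∞)
    (hcompl : A * ∫⁻ y in Sᶜ, ‖f y‖ₑ ∂ν ≤ l / 2) :
    μ {x | l < ‖∫ y, k x y * f y ∂ν‖ₑ} ≤
      (2 * M) ^ 2 / l ^ 2 * ∫⁻ y in S, ‖f y‖ₑ ^ 2 ∂ν := by
  have hlow (x : X) : ‖∫ y, k x y * Sᶜ.indicator f y ∂ν‖ₑ ≤ l / 2 := by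
    refine (enorm_integral_kernel_le hkA _ x).trans ?_
    simpa only [enorm_indicator_eq_indicator_enorm, lintegral_indicator hS.compl] using hcompl
  have hsplit (x : X) : ∫ y, k x y * f y ∂ν =
      (∫ y, k x y * S.indicator f y ∂ν) + ∫ y, k x y * Sᶜ.indicator f y ∂ν := by
    rw [← integral_add (integrable_kernel_mul hk hkA (hfi.indicator hS) x)
      (integrable_kernel_mul hk hkA (hfi.indicator hS.compl) x)]
    simp only [← mul_add, indicator_self_add_compl_apply]
  have hsub : {x | l < ‖∫ y, k x y * f y ∂ν‖ₑ} ⊆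
      {x | l / 2 ≤ ‖∫ y, k x y * S.indicator f y ∂ν‖ₑ} := by
    intro x hx
    by_contra hlt
    refine not_le.2 (show l < _ from hx) ?_
    rw [hsplit x, ← ENNReal.add_halves l]
    exact (enorm_add_le _ _).trans (add_le_add (not_le.1 hlt).le (hlow x))
  have hmeas := stronglyMeasurable_integral_kernel (ν := ν) hk (hf.indicator hS)
  have hl2 : l / 2 ≠ 0 := (ENNReal.half_pos hl0).ne'
  calc μ {x | l < ‖∫ y, k x y * f y ∂ν‖ₑ}
      ≤ μ {x | l / 2 ≤ ‖∫ y, k x y * S.indicator f y ∂ν‖ₑ} := measure_mono hsub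
    _ ≤ (l / 2)⁻¹ ^ (2 : ℝ≥0∞).toReal *
          eLpNorm (fun x => ∫ y, k x y * S.indicator f y ∂ν) 2 μ ^ (2 : ℝ≥0∞).toReal :=
        meas_ge_le_mul_pow_eLpNorm_enorm μ two_ne_zero (by simp) hmeas.aestronglyMeasurable hl2
          (fun h => absurd h (ENNReal.div_ne_top hl two_ne_zero))
    _ ≤ (l / 2)⁻¹ ^ 2 * (M * eLpNorm (S.indicator f) 2 ν) ^ 2 := by
        simp only [ENNReal.toReal_ofNat, ENNReal.rpow_ofNat]
        gcongr
        exact hL2 _ (hf.indicator hS) (hfi.indicator hS)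
    _ = (2 * M) ^ 2 / l ^ 2 * ∫⁻ y in S, ‖f y‖ₑ ^ 2 ∂ν := by
        rw [mul_pow M, eLpNorm_indicator_eq_eLpNorm_restrict hS, eLpNorm_two_sq,
          ENNReal.inv_div (by simp) (by simp [hl0])]
        simp only [div_eq_mul_inv, mul_pow, ENNReal.inv_pow]
        ring

lemma lintegral_enorm_integral_kernel_rpow_le (hk : StronglyMeasurable (Function.uncurry k))
    (hkA : ∀ x y, ‖k x y‖ₑ ≤ A) (hM : M ≠ ∞)
    (hL2 : ∀ g : Y → 𝕜, StronglyMeasurable g → Integrable g ν →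
      eLpNorm (fun x => ∫ y, k x y * g y ∂ν) 2 μ ≤ M * eLpNorm g 2 ν)
    {f : Y → 𝕜} (hf : StronglyMeasurable f) (hfi : Integrable f ν) {r : ℝ} (hr : 2 < r)
    (hN : ∫⁻ y, ‖f y‖ₑ ^ (r / (r - 1)) ∂ν ≠ ∞) :
    ∫⁻ x, ‖∫ y, k x y * f y ∂ν‖ₑ ^ r ∂μ ≤ (2 * M) ^ 2 * ENNReal.ofReal (r / (r - 2)) *
      ((2 * A * ∫⁻ y, ‖f y‖ₑ ^ (r / (r - 1)) ∂ν) ^ (r - 2) *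
        ∫⁻ y, ‖f y‖ₑ ^ (r / (r - 1)) ∂ν) := by
  have hr1 : r - 1 ≠ 0 := by linarith
  have hs : 0 ≤ 1 / (r - 1) := one_div_nonneg.2 (by linarith)
  have hs1 : 1 / (r - 1) + 1 = r / (r - 1) := by field_simp; ring
  have hmeas : Measurable fun y => ‖f y‖ₑ := hf.measurable.enorm
  set N := ∫⁻ y, ‖f y‖ₑ ^ (r / (r - 1)) ∂ν
  set H : Y → ℝ≥0∞ := fun y => 2 * A * N / ‖f y‖ₑ ^ (1 / (r - 1))
  have hH : Measurable H := measurable_const.div (hmeas.pow_const _)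
  have hweak (l : ℝ) (hl : 0 < l) : μ {x | ENNReal.ofReal l < ‖∫ y, k x y * f y ∂ν‖ₑ} ≤
      (2 * M) ^ 2 * ENNReal.ofReal (l ^ (-2 : ℝ)) *
        ν.withDensity (fun y => ‖f y‖ₑ ^ 2) {y | ENNReal.ofReal l < H y} := by
    have hS : MeasurableSet {y | ENNReal.ofReal l < H y} := measurableSet_lt measurable_const hH
    have hl0 : ENNReal.ofReal l ≠ 0 := (ENNReal.ofReal_pos.2 hl).ne'
    refine (measure_lt_enorm_integral_kernel_le hk hkA hL2 hf hfi hS hl0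
      ENNReal.ofReal_ne_top ?_).trans_eq ?_
    · have h := mul_setLIntegral_enorm_le (A := A) hf hs (by rwa [hs1]) hl0 ENNReal.ofReal_ne_top
      simpa only [hs1] using h
    · rw [withDensity_apply _ hS, div_eq_mul_inv, ← ENNReal.ofReal_rpow_of_pos hl,
        ENNReal.rpow_neg, ENNReal.rpow_two]
  refine (lintegral_rpow_le_of_measure_lt_le
    (stronglyMeasurable_integral_kernel hk hf).enorm.aemeasurable hH.aemeasurable
    (by finiteness) (by linarith) (by linarith) hweak).trans_eq ?_
  rw [← sub_eq_add_neg, lintegral_withDensity_eq_lintegral_mul _ (hmeas.pow_const 2)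
    (hH.pow_const _), ← lintegral_const_mul _ (hmeas.pow_const _)]
  exact congrArg _ (lintegral_congr fun y => sq_mul_div_rpow hr _ enorm_ne_top)

/-- The constant in the interpolation estimate `eLpNorm'_integral_kernel_le` between `L¹ → L^∞`
and `L² → L²`. -/
noncomputable def interpolationConst (r : ℝ) : ℝ≥0∞ :=
  (4 * ENNReal.ofReal (r / (r - 2)) * 2 ^ (r - 2)) ^ (1 / r)

lemma interpolationConst_ne_top {r : ℝ} (hr : 2 < r) : interpolationConst r ≠ ∞ :=
  ENNReal.rpow_ne_top_of_nonneg (one_div_nonneg.2 (by linarith))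
    (ENNReal.mul_ne_top (by finiteness)
      (ENNReal.rpow_ne_top_of_nonneg (by linarith) ENNReal.ofNat_ne_top))

theorem eLpNorm'_integral_kernel_le (hk : StronglyMeasurable (Function.uncurry k))
    (hkA : ∀ x y, ‖k x y‖ₑ ≤ A) (hM : M ≠ ∞)
    (hL2 : ∀ g : Y → 𝕜, StronglyMeasurable g → Integrable g ν →
      eLpNorm (fun x => ∫ y, k x y * g y ∂ν) 2 μ ≤ M * eLpNorm g 2 ν)
    {f : Y → 𝕜} (hf : StronglyMeasurable f) (hfi : Integrable f ν) {r : ℝ} (hr : 2 < r)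
    (hfin : eLpNorm' f (r / (r - 1)) ν ≠ ∞) :
    eLpNorm' (fun x => ∫ y, k x y * f y ∂ν) r μ ≤
      interpolationConst r * M ^ (2 / r) * A ^ (1 - 2 / r) * eLpNorm' f (r / (r - 1)) ν := by
  have hr0 : 0 < r := by linarith
  have hr1 : r - 1 ≠ 0 := by linarith
  have hp : 0 < r / (r - 1) := div_pos hr0 (by linarith)
  have hrinv : 0 ≤ 1 / r := by positivity
  have hN := ((lintegral_rpow_enorm_lt_top_of_eLpNorm'_lt_top hp
    (lt_top_iff_ne_top.2 hfin))).ne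
  have h := lintegral_enorm_integral_kernel_rpow_le hk hkA hM hL2 hf hfi hr hN
  simp only [eLpNorm'_eq_lintegral_enorm, interpolationConst]
  set N := ∫⁻ y, ‖f y‖ₑ ^ (r / (r - 1)) ∂ν
  refine (ENNReal.rpow_le_rpow h hrinv).trans_eq ?_
  have hN_pow : N ^ (r - 1) = N ^ (r - 2) * N := by
    rw [show r - 1 = (r - 2) + 1 by ring, ENNReal.rpow_add_of_nonneg _ _ (by linarith) zero_le_one,
      ENNReal.rpow_one]
  have hregroup : (2 * M) ^ 2 * ENNReal.ofReal (r / (r - 2)) * ((2 * A * N) ^ (r - 2) * N) =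
      4 * ENNReal.ofReal (r / (r - 2)) * 2 ^ (r - 2) * M ^ (2 : ℝ) * A ^ (r - 2) *
        N ^ (r - 1) := by
    rw [hN_pow, ENNReal.mul_rpow_of_nonneg _ _ (by linarith),
      ENNReal.mul_rpow_of_nonneg _ _ (by linarith), ENNReal.rpow_two]
    ring
  rw [hregroup]
  simp only [ENNReal.mul_rpow_of_nonneg _ _ hrinv, ← ENNReal.rpow_mul]
  rw [show 1 - 2 / r = (r - 2) * (1 / r) by field_simp,
    show 1 / (r / (r - 1)) = (r - 1) * (1 / r) by field_simp, show 2 / r = 2 * (1 / r) by ring]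

end Interpolation

/-! ### The Hardy–Littlewood–Sobolev inequality on the line -/

section WeakType

variable {G : Type*} [AddGroup G] [MeasurableSpace G] [MeasurableAdd₂ G] [MeasurableNeg G]
  {μ : Measure G} {K K₁ K₂ h : G → ℝ≥0∞}

lemma lintegral_add_mul_eq_indicator_add (hK₁ : Measurable K₁) (hh : Measurable h) {B : Set G}
    (hB : MeasurableSet B) (t : G) :
    ∫⁻ τ, (K₁ (t - τ) + K₂ (t - τ)) * h τ ∂μ =
      (∫⁻ τ, K₁ (t - τ) * B.indicator h τ ∂μ) + ((∫⁻ τ, K₁ (t - τ) * Bᶜ.indicator h τ ∂μ) +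
        ∫⁻ τ, K₂ (t - τ) * h τ ∂μ) := by
  have := hh.indicator hB
  have := hh.indicator hB.compl
  rw [← lintegral_add_left (by fun_prop), ← lintegral_add_left (by fun_prop)]
  refine lintegral_congr fun τ => ?_
  rw [← add_assoc, ← mul_add, indicator_self_add_compl_apply, add_mul]

variable [SFinite μ]

lemma lintegral_lintegral_sub_mul [μ.IsAddRightInvariant] (hK : Measurable K) (hh : Measurable h) :
    ∫⁻ t, ∫⁻ τ, K (t - τ) * h τ ∂μ ∂μ = (∫⁻ s, K s ∂μ) * ∫⁻ τ, h τ ∂μ := by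
  have hmeas : Measurable fun z : G × G => K (z.1 - z.2) * h z.2 :=
    (hK.comp (measurable_fst.sub measurable_snd)).mul (hh.comp measurable_snd)
  rw [lintegral_lintegral_swap hmeas.aemeasurable, ← lintegral_const_mul _ hh]
  refine lintegral_congr fun τ => ?_
  rw [lintegral_mul_const _ (by fun_prop)]
  congr 1
  exact lintegral_sub_right_eq_self K τ

lemma measure_lt_lintegral_sub_mul_le [μ.IsAddLeftInvariant] [μ.IsAddRightInvariant]
    [μ.IsNegInvariant] (hK₁ : Measurable K₁) (hh : Measurable h)
    {l c : ℝ≥0∞} (hl0 : l ≠ 0) (hl : l ≠ ∞)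
    (hfar : ∀ t, ∫⁻ τ, K₂ (t - τ) * h τ ∂μ ≤ l / 2 / 2) (hnear : (∫⁻ s, K₁ s ∂μ) * c ≤ l / 2 / 2) :
    μ {t | l < ∫⁻ τ, (K₁ (t - τ) + K₂ (t - τ)) * h τ ∂μ} ≤
      2 / l * ((∫⁻ s, K₁ s ∂μ) * ∫⁻ τ in {τ | c < h τ}, h τ ∂μ) := by
  set B := {τ | c < h τ}
  have hB : MeasurableSet B := measurableSet_lt measurable_const hh
  have hsmall (t : G) : ∫⁻ τ, K₁ (t - τ) * Bᶜ.indicator h τ ∂μ ≤ l / 2 / 2 := by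
    have hle (τ : G) : Bᶜ.indicator h τ ≤ c := indicator_le' (fun _ hτ => not_lt.1 hτ)
      (fun _ _ => zero_le) τ
    refine le_trans ?_ hnear
    rw [← lintegral_sub_left_eq_self K₁ t, ← lintegral_mul_const _ (by fun_prop)]
    exact lintegral_mono fun τ => mul_le_mul_right (hle τ) _
  have hsub : {t | l < ∫⁻ τ, (K₁ (t - τ) + K₂ (t - τ)) * h τ ∂μ} ⊆
      {t | l / 2 ≤ ∫⁻ τ, K₁ (t - τ) * B.indicator h τ ∂μ} := by
    intro t ht
    by_contra hlt
    refine not_le.2 (show l < _ from ht) ?_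
    calc ∫⁻ τ, (K₁ (t - τ) + K₂ (t - τ)) * h τ ∂μ ≤ l / 2 + (l / 2 / 2 + l / 2 / 2) := by
          rw [lintegral_add_mul_eq_indicator_add hK₁ hh hB t]
          exact add_le_add (not_le.1 hlt).le (add_le_add (hsmall t) (hfar t))
      _ = l := by simp only [ENNReal.add_halves]
  have hmeas : Measurable fun z : G × G => K₁ (z.1 - z.2) * B.indicator h z.2 :=
    (hK₁.comp (measurable_fst.sub measurable_snd)).mul ((hh.indicator hB).comp measurable_snd)
  calc μ {t | l < ∫⁻ τ, (K₁ (t - τ) + K₂ (t - τ)) * h τ ∂μ}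
      ≤ μ {t | l / 2 ≤ ∫⁻ τ, K₁ (t - τ) * B.indicator h τ ∂μ} := measure_mono hsub
    _ ≤ (∫⁻ t, ∫⁻ τ, K₁ (t - τ) * B.indicator h τ ∂μ ∂μ) / (l / 2) :=
        meas_ge_le_lintegral_div hmeas.lintegral_prod_right'.aemeasurable
          (ENNReal.half_pos hl0).ne' (ENNReal.div_ne_top hl two_ne_zero)
    _ = 2 / l * ((∫⁻ s, K₁ s ∂μ) * ∫⁻ τ in B, h τ ∂μ) := by
        rw [lintegral_lintegral_sub_mul hK₁ (hh.indicator hB), lintegral_indicator hB,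
          mul_comm (2 / l), div_eq_mul_inv, ENNReal.inv_div (by simp) (by simp)]

end WeakType

lemma lintegral_comp_abs_eq (g : ℝ → ℝ≥0∞) :
    ∫⁻ s : ℝ, g |s| = 2 * ∫⁻ s in Ioi (0 : ℝ), g s := by
  have hpos : ∫⁻ s in Ioi (0 : ℝ), g |s| = ∫⁻ s in Ioi (0 : ℝ), g s :=
    setLIntegral_congr_fun measurableSet_Ioi fun s hs => by rw [abs_of_pos hs]
  have hneg : ∫⁻ s in Iic (0 : ℝ), g |s| = ∫⁻ s in Ioi (0 : ℝ), g s := by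
    rw [← hpos, ← restrict_Iio_eq_restrict_Iic, ← lintegral_indicator measurableSet_Iio,
      ← lintegral_indicator measurableSet_Ioi, ← lintegral_neg_eq_self]
    refine lintegral_congr fun s => ?_
    simp only [indicator, mem_Iio, mem_Ioi, neg_lt_zero, abs_neg]
  rw [← lintegral_add_compl _ (measurableSet_Ioi (a := (0 : ℝ))), compl_Ioi, hpos, hneg, two_mul]

lemma lintegral_indicator_Iio_abs_rpow {α R : ℝ} (hα : α < 1) (hR : 0 < R) :
    ∫⁻ s : ℝ, (Iio R).indicator (fun u => ENNReal.ofReal (u ^ (-α))) |s| =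
      ENNReal.ofReal (2 * R ^ (1 - α) / (1 - α)) := by
  have hint : IntegrableOn (fun u : ℝ => u ^ (-α)) (Ioo 0 R) :=
    (intervalIntegral.integrableOn_Ioo_rpow_iff hR).2 (by linarith)
  rw [lintegral_comp_abs_eq, lintegral_indicator measurableSet_Iio,
    Measure.restrict_restrict measurableSet_Iio, inter_comm, Ioi_inter_Iio,
    ← ofReal_integral_eq_lintegral_ofReal hint ((ae_restrict_mem measurableSet_Ioo).mono
      fun u hu => Real.rpow_nonneg hu.1.le _),
    ← integral_Ioc_eq_integral_Ioo, ← intervalIntegral.integral_of_le hR.le,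
    integral_rpow (.inl (by linarith)), Real.zero_rpow (by linarith), sub_zero,
    neg_add_eq_sub, ← ENNReal.ofReal_ofNat 2, ← ENNReal.ofReal_mul zero_le_two, mul_div_assoc]

lemma lintegral_indicator_Ici_abs_rpow {β R : ℝ} (hβ : 1 < β) (hR : 0 < R) :
    ∫⁻ s : ℝ, (Ici R).indicator (fun u => ENNReal.ofReal (u ^ (-β))) |s| =
      ENNReal.ofReal (2 * R ^ (1 - β) / (β - 1)) := by
  rw [lintegral_comp_abs_eq, lintegral_indicator measurableSet_Ici,
    Measure.restrict_restrict measurableSet_Ici,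
    inter_eq_self_of_subset_left (Ici_subset_Ioi.2 hR), ← restrict_Ioi_eq_restrict_Ici,
    ← ofReal_integral_eq_lintegral_ofReal (integrableOn_Ioi_rpow_of_lt (by linarith) hR)
      ((ae_restrict_mem measurableSet_Ioi).mono fun u hu => Real.rpow_nonneg (hR.trans hu).le _),
    integral_Ioi_rpow_of_lt (by linarith) hR, ← ENNReal.ofReal_ofNat 2,
    ← ENNReal.ofReal_mul zero_le_two, neg_add_eq_sub, mul_div_assoc, ← neg_sub β 1, div_neg,
    neg_div, neg_neg]

lemma eLpNorm'_const_mul_ennreal {X : Type*} [MeasurableSpace X] {μ : Measure X} {p : ℝ}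
    (hp : 0 < p) {c : ℝ≥0∞} (hc : c ≠ ∞) (g : X → ℝ≥0∞) :
    eLpNorm' (fun x => c * g x) p μ = c * eLpNorm' g p μ := by
  simp only [eLpNorm', enorm_eq_self, ENNReal.mul_rpow_of_nonneg _ _ hp.le]
  rw [lintegral_const_mul' _ _ (ENNReal.rpow_ne_top_of_nonneg hp.le hc),
    ENNReal.mul_rpow_of_nonneg _ _ (by positivity), ← ENNReal.rpow_mul, mul_one_div_cancel hp.ne',
    ENNReal.rpow_one]

/-- The fractional integral (Riesz potential) `∫ |t - τ|^(-α) h(τ) dτ` on the line. -/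
noncomputable def fractionalIntegral (α : ℝ) (h : ℝ → ℝ≥0∞) (t : ℝ) : ℝ≥0∞ :=
  ∫⁻ τ, ENNReal.ofReal (|t - τ| ^ (-α)) * h τ

lemma measurable_fractionalIntegral (α : ℝ) {h : ℝ → ℝ≥0∞} (hh : Measurable h) :
    Measurable (fractionalIntegral α h) :=
  Measurable.lintegral_prod_right'
    (f := fun z : ℝ × ℝ => ENNReal.ofReal (|z.1 - z.2| ^ (-α)) * h z.2) (by fun_prop)

lemma fractionalIntegral_const_mul (α : ℝ) (h : ℝ → ℝ≥0∞) {c : ℝ≥0∞} (hc : c ≠ ∞) :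
    fractionalIntegral α (fun τ => c * h τ) = fun t => c * fractionalIntegral α h t := by
  funext t
  simp only [fractionalIntegral, mul_left_comm, lintegral_const_mul' _ _ hc]

/-- The radius `R` for which the part `|t - τ| ≥ R` of the fractional integral of order
`α = 1 - 1 / p + 1 / q` of a function of unit `L^p` norm is at most `l / 4`. -/
noncomputable def hlsRadius (p q l : ℝ) : ℝ :=
  (2 * q * (1 - 1 / p)) ^ (q * (1 - 1 / p)) * (4 / l) ^ q

/-- The mass of `|s|^(-α)`, `α = 1 - 1 / p + 1 / q`, on the interval `|s| < hlsRadius p q 1`. -/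
noncomputable def hlsNearConst (p q : ℝ) : ℝ :=
  2 * hlsRadius p q 1 ^ (1 / p - 1 / q) / (1 / p - 1 / q)

lemma hlsRadius_pos {p q l : ℝ} (hp : 1 < p) (hq : 0 < q) (hl : 0 < l) : 0 < hlsRadius p q l := by
  have hp' : 0 < 1 - 1 / p := sub_pos.2 ((div_lt_one (by linarith)).2 hp)
  unfold hlsRadius
  positivity

lemma hlsNearConst_pos {p q : ℝ} (hp : 1 < p) (hpq : p < q) : 0 < hlsNearConst p q := by
  have hdiff : 0 < 1 / p - 1 / q := sub_pos.2 (one_div_lt_one_div_of_lt (by linarith) hpq)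
  have hR := hlsRadius_pos hp (by linarith : 0 < q) one_pos
  unfold hlsNearConst
  positivity

lemma lintegral_far_rpow {p q R : ℝ} (hp : 1 < p) (hq : 0 < q) (hR : 0 < R) :
    ∫⁻ s : ℝ, (Ici R).indicator (fun u => ENNReal.ofReal (u ^ (-(1 - 1 / p + 1 / q)))) |s| ^
        (p / (p - 1)) =
      ENNReal.ofReal (2 * q * (1 - 1 / p) * R ^ (-(p / (p - 1) / q))) := by
  have hp1 : 0 < p - 1 := by linarith
  have hp' : 0 < p / (p - 1) := by positivity
  have hβ : (1 - 1 / p + 1 / q) * (p / (p - 1)) = 1 + p / (p - 1) / q := by field_simp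
  have h := lintegral_indicator_Ici_abs_rpow (R := R) (β := 1 + p / (p - 1) / q)
    (lt_add_of_pos_right _ (by positivity)) hR
  rw [show 2 * q * (1 - 1 / p) * R ^ (-(p / (p - 1) / q)) =
      2 * R ^ (1 - (1 + p / (p - 1) / q)) / (1 + p / (p - 1) / q - 1) by
    rw [sub_add_cancel_left, add_sub_cancel_left]; field_simp, ← h]
  refine lintegral_congr fun s => ?_
  by_cases hs : |s| ∈ Ici R
  · rw [indicator_of_mem hs, indicator_of_mem hs, ← hβ, ← neg_mul,
      ENNReal.ofReal_rpow_of_nonneg (by positivity) hp'.le, ← Real.rpow_mul (abs_nonneg s)]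
  · rw [indicator_of_notMem hs, indicator_of_notMem hs, ENNReal.zero_rpow_of_pos hp']

lemma lintegral_near_hlsRadius {p q l : ℝ} (hp : 1 < p) (hpq : p < q) (hl : 0 < l) :
    ∫⁻ s : ℝ, (Iio (hlsRadius p q l)).indicator
        (fun u => ENNReal.ofReal (u ^ (-(1 - 1 / p + 1 / q)))) |s| =
      ENNReal.ofReal (hlsNearConst p q * l ^ (1 - q / p)) := by
  have hq : 0 < q := by linarith
  have hdiff : 0 < 1 / p - 1 / q := sub_pos.2 (one_div_lt_one_div_of_lt (by linarith) hpq)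
  have hR := hlsRadius_pos hp hq one_pos
  have hscale : hlsRadius p q l = hlsRadius p q 1 * l ^ (-q) := by
    rw [hlsRadius, hlsRadius, div_one, Real.div_rpow (by norm_num) hl.le, Real.rpow_neg hl.le,
      ← div_eq_mul_inv, mul_div_assoc]
  rw [lintegral_indicator_Iio_abs_rpow (by linarith) (hlsRadius_pos hp hq hl),
    show 1 - (1 - 1 / p + 1 / q) = 1 / p - 1 / q by ring, hscale,
    Real.mul_rpow hR.le (by positivity), ← Real.rpow_mul hl.le, hlsNearConst,
    show -q * (1 / p - 1 / q) = 1 - q / p by field_simp; ring]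
  congr 1
  ring

lemma hlsRadius_rpow_eq {p q l : ℝ} (hp : 1 < p) (hq : 0 < q) (hl : 0 < l) :
    (2 * q * (1 - 1 / p) * hlsRadius p q l ^ (-(p / (p - 1) / q))) ^ (1 - 1 / p) = l / 4 := by
  have hp' : 0 < 1 - 1 / p := sub_pos.2 ((div_lt_one (by linarith)).2 hp)
  have hp1 : p - 1 ≠ 0 := by linarith
  have hR := hlsRadius_pos hp hq hl
  have hbase : 0 < 2 * q * (1 - 1 / p) := by positivity
  rw [Real.mul_rpow (x := 2 * q * (1 - 1 / p)) hbase.le (by positivity), ← Real.rpow_mul hR.le,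
    show -(p / (p - 1) / q) * (1 - 1 / p) = -(1 / q) by field_simp, hlsRadius,
    Real.mul_rpow (z := -(1 / q)) (by positivity) (by positivity), ← Real.rpow_mul hbase.le,
    ← Real.rpow_mul (by positivity), show q * (1 - 1 / p) * -(1 / q) = -(1 - 1 / p) by field_simp,
    ← mul_assoc, ← Real.rpow_add hbase, add_neg_cancel, Real.rpow_zero, one_mul,
    show q * -(1 / q) = -1 by field_simp, Real.rpow_neg_one, inv_div]

lemma lintegral_far_hlsRadius_le {p q l : ℝ} (hp : 1 < p) (hq : 0 < q) (hl : 0 < l)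
    {h : ℝ → ℝ≥0∞} (hh : Measurable h) (hN : eLpNorm' h p volume ≤ 1) (t : ℝ) :
    ∫⁻ τ, (Ici (hlsRadius p q l)).indicator
        (fun u => ENNReal.ofReal (u ^ (-(1 - 1 / p + 1 / q)))) |t - τ| * h τ ≤
      ENNReal.ofReal (l / 4) := by
  have hp' : 0 < 1 - 1 / p := sub_pos.2 ((div_lt_one (by linarith)).2 hp)
  have hexp : 1 / (p / (p - 1)) = 1 - 1 / p := by field_simp
  have hradius := hlsRadius_rpow_eq hp hq hl
  have hR := hlsRadius_pos hp hq hl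
  set K : ℝ → ℝ≥0∞ := fun s => (Ici (hlsRadius p q l)).indicator
    (fun u => ENNReal.ofReal (u ^ (-(1 - 1 / p + 1 / q)))) |s|
  have hK : Measurable K :=
    ((by fun_prop : Measurable _).indicator measurableSet_Ici).comp measurable_id.abs
  calc ∫⁻ τ, K (t - τ) * h τ
      ≤ (∫⁻ τ, K (t - τ) ^ (p / (p - 1))) ^ (1 / (p / (p - 1))) * (∫⁻ τ, h τ ^ p) ^ (1 / p) :=
        ENNReal.lintegral_mul_le_Lp_mul_Lq volume (Real.HolderConjugate.conjExponent hp).symm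
          (by fun_prop) hh.aemeasurable
    _ ≤ (∫⁻ s, K s ^ (p / (p - 1))) ^ (1 / (p / (p - 1))) * 1 := by
        rw [lintegral_sub_left_eq_self (fun s => K s ^ (p / (p - 1))) t]
        exact mul_le_mul_right (by simpa only [eLpNorm', enorm_eq_self] using hN) _
    _ = ENNReal.ofReal (l / 4) := by
        rw [lintegral_far_rpow hp hq hR, mul_one, hexp,
          ENNReal.ofReal_rpow_of_nonneg (by positivity) hp'.le, hradius]

lemma setOf_ofReal_rpow_div_lt {X : Type*} {l c p q : ℝ} (hl : 0 < l) (hc : 0 < c) (hp : 0 < p)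
    (hq : 0 < q) {h : X → ℝ≥0∞} :
    {x | ENNReal.ofReal (l ^ (q / p) / c) < h x} =
      {x | ENNReal.ofReal l < (ENNReal.ofReal c * h x) ^ (p / q)} := by
  ext x
  rw [mem_ofPred_eq, mem_ofPred_eq, ENNReal.ofReal_div_of_pos hc,
    ENNReal.div_lt_iff (.inl (ENNReal.ofReal_pos.2 hc).ne') (.inl ENNReal.ofReal_ne_top),
    mul_comm (h x), ← ENNReal.ofReal_rpow_of_pos hl, ← inv_div p q,
    ENNReal.rpow_inv_lt_iff (div_pos hp hq)]

lemma measure_lt_fractionalIntegral_le {p q l : ℝ} (hp : 1 < p) (hpq : p < q) (hl : 0 < l)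
    {h : ℝ → ℝ≥0∞} (hh : Measurable h) (hN : eLpNorm' h p volume ≤ 1) :
    volume {t | ENNReal.ofReal l < fractionalIntegral (1 - 1 / p + 1 / q) h t} ≤
      ENNReal.ofReal (2 * hlsNearConst p q) * ENNReal.ofReal (l ^ (-(q / p))) *
        volume.withDensity h
          {τ | ENNReal.ofReal l < (ENNReal.ofReal (4 * hlsNearConst p q) * h τ) ^ (p / q)} := by
  have hq : 0 < q := by linarith
  have hA := hlsNearConst_pos hp hpq
  set A := hlsNearConst p q
  set φ : ℝ → ℝ≥0∞ := fun u => ENNReal.ofReal (u ^ (-(1 - 1 / p + 1 / q)))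
  set R := hlsRadius p q l
  have hquarter : ENNReal.ofReal l / 2 / 2 = ENNReal.ofReal (l / 4) := by
    rw [← ENNReal.ofReal_ofNat 2, ← ENNReal.ofReal_div_of_pos two_pos,
      ← ENNReal.ofReal_div_of_pos two_pos, div_div, show (2 : ℝ) * 2 = 4 by norm_num]
  have hnear := lintegral_near_hlsRadius hp hpq hl
  have hweak := measure_lt_lintegral_sub_mul_le (μ := volume)
    (K₁ := fun s => (Iio R).indicator φ |s|) (K₂ := fun s => (Ici R).indicator φ |s|)
    (l := ENNReal.ofReal l) (c := ENNReal.ofReal (l ^ (q / p) / (4 * A)))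
    (((by fun_prop : Measurable φ).indicator measurableSet_Iio).comp measurable_id.abs) hh
    (ENNReal.ofReal_pos.2 hl).ne' ENNReal.ofReal_ne_top
    (fun t => (lintegral_far_hlsRadius_le hp hq hl hh hN t).trans_eq hquarter.symm) (by
      rw [hnear, hquarter, ← ENNReal.ofReal_mul (by positivity)]
      refine (congrArg ENNReal.ofReal ?_).le
      rw [Real.rpow_sub hl, Real.rpow_one]
      field_simp
      rfl)
  have hsplit (s : ℝ) : (Iio R).indicator φ |s| + (Ici R).indicator φ |s| = φ |s| := by
    rw [← compl_Iio, indicator_self_add_compl_apply]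
  rw [setOf_ofReal_rpow_div_lt hl (by positivity) (by linarith) hq, hnear] at hweak
  simp only [hsplit] at hweak
  refine hweak.trans_eq ?_
  rw [withDensity_apply _ (measurableSet_lt measurable_const (by fun_prop)), ← mul_assoc,
    ← ENNReal.ofReal_mul (by positivity), ← ENNReal.ofReal_ofNat 2,
    ← ENNReal.ofReal_div_of_pos hl, ← ENNReal.ofReal_mul (by positivity)]
  congr 2
  rw [sub_eq_add_neg, Real.rpow_add hl, Real.rpow_one]
  field_simp
  rfl

/-- The constant in the Hardy–Littlewood–Sobolev inequality `eLpNorm'_fractionalIntegral_le`. -/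
noncomputable def hlsConst (p q : ℝ) : ℝ≥0∞ :=
  (ENNReal.ofReal (2 * hlsNearConst p q) * ENNReal.ofReal (p / (p - 1)) *
    ENNReal.ofReal (4 * hlsNearConst p q) ^ (p - 1)) ^ (1 / q)

lemma hlsConst_ne_top {p q : ℝ} (hp : 1 < p) (hpq : p < q) : hlsConst p q ≠ ∞ :=
  ENNReal.rpow_ne_top_of_nonneg (one_div_nonneg.2 (by linarith)) (ENNReal.mul_ne_top
    (by finiteness) (ENNReal.rpow_ne_top_of_nonneg (by linarith) ENNReal.ofReal_ne_top))

lemma hlsConst_ne_zero {p q : ℝ} (hp : 1 < p) (hpq : p < q) : hlsConst p q ≠ 0 := by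
  have hA := hlsNearConst_pos hp hpq
  have hp' : 0 < p / (p - 1) := div_pos (by linarith) (by linarith)
  refine (ENNReal.rpow_pos (pos_iff_ne_zero.2 (mul_ne_zero ?_ ?_)) ?_).ne'
  · simp [hA, hp']
  · exact (ENNReal.rpow_pos (by simpa using hA) ENNReal.ofReal_ne_top).ne'
  · exact ENNReal.mul_ne_top (by finiteness)
      (ENNReal.rpow_ne_top_of_nonneg (by linarith) ENNReal.ofReal_ne_top)

lemma eLpNorm'_fractionalIntegral_le_of_le_one {p q : ℝ} (hp : 1 < p) (hpq : p < q)
    {h : ℝ → ℝ≥0∞} (hh : Measurable h) (hN : eLpNorm' h p volume ≤ 1) :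
    eLpNorm' (fractionalIntegral (1 - 1 / p + 1 / q) h) q volume ≤ hlsConst p q := by
  have hp0 : 0 < p := by linarith
  have hq : 0 < q := by linarith
  have : 1 < q / p := (one_lt_div hp0).2 hpq
  have hexp : q + -(q / p) = q * (1 - 1 / p) := by ring
  have hp' : 0 < 1 - 1 / p := sub_pos.2 ((div_lt_one hp0).2 hp)
  have hN1 : ∫⁻ τ, h τ ^ p ≤ 1 := by
    simpa only [eLpNorm', enorm_eq_self, one_div, ENNReal.rpow_inv_le_iff hp0, ENNReal.one_rpow]
      using hN
  set A := hlsNearConst p q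
  have hlayer := lintegral_rpow_le_of_measure_lt_le
    (measurable_fractionalIntegral _ hh).aemeasurable
    (H := fun τ => (ENNReal.ofReal (4 * A) * h τ) ^ (p / q)) (by fun_prop)
    ENNReal.ofReal_ne_top hq (by rw [hexp]; positivity)
    fun l hl => measure_lt_fractionalIntegral_le hp hpq hl hh hN
  rw [eLpNorm', hlsConst]
  refine ENNReal.rpow_le_rpow (hlayer.trans ?_) (by positivity)
  rw [hexp, lintegral_withDensity_eq_lintegral_mul _ hh (by fun_prop),
    show q / (q * (1 - 1 / p)) = p / (p - 1) by field_simp]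
  gcongr
  calc ∫⁻ τ, h τ * ((ENNReal.ofReal (4 * A) * h τ) ^ (p / q)) ^ (q * (1 - 1 / p))
      = ∫⁻ τ, ENNReal.ofReal (4 * A) ^ (p - 1) * h τ ^ p := by
        refine lintegral_congr fun τ => ?_
        rw [← ENNReal.rpow_mul, show p / q * (q * (1 - 1 / p)) = p - 1 by field_simp,
          ENNReal.mul_rpow_of_nonneg _ _ (by linarith), mul_left_comm]
        congr 1
        nth_rewrite 1 [← ENNReal.rpow_one (h τ)]
        rw [← ENNReal.rpow_add_of_nonneg _ _ zero_le_one (by linarith), add_sub_cancel]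
    _ = ENNReal.ofReal (4 * A) ^ (p - 1) * ∫⁻ τ, h τ ^ p := lintegral_const_mul _ (by fun_prop)
    _ ≤ ENNReal.ofReal (4 * A) ^ (p - 1) := mul_le_of_le_one_right' hN1

theorem eLpNorm'_fractionalIntegral_le {p q : ℝ} (hp : 1 < p) (hpq : p < q) {h : ℝ → ℝ≥0∞}
    (hh : Measurable h) :
    eLpNorm' (fractionalIntegral (1 - 1 / p + 1 / q) h) q volume ≤
      hlsConst p q * eLpNorm' h p volume := by
  have hp0 : 0 < p := by linarith
  have hq : 0 < q := by linarith
  rcases eq_or_ne (eLpNorm' h p volume) ∞ with htop | htop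
  · rw [htop, ENNReal.mul_top (hlsConst_ne_zero hp hpq)]
    exact le_top
  rcases eq_or_ne (eLpNorm' h p volume) 0 with hzero | hzero
  · have hh0 : h =ᵐ[volume] 0 := ae_eq_zero_of_eLpNorm'_eq_zero hp0.le hh.aestronglyMeasurable hzero
    have hI : fractionalIntegral (1 - 1 / p + 1 / q) h = 0 := by
      funext t
      refine (lintegral_congr_ae (hh0.mono fun τ hτ => ?_)).trans lintegral_zero
      simp only [hτ, Pi.zero_apply, mul_zero]
    rw [hI, eLpNorm'_zero hq]
    exact zero_le
  set N := eLpNorm' h p volume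
  have hNinv : N⁻¹ ≠ ∞ := ENNReal.inv_ne_top.2 hzero
  have hnorm : eLpNorm' (fun τ => N⁻¹ * h τ) p volume ≤ 1 := by
    rw [eLpNorm'_const_mul_ennreal hp0 hNinv, ENNReal.inv_mul_cancel hzero htop]
  have hle := eLpNorm'_fractionalIntegral_le_of_le_one hp hpq (hh.const_mul N⁻¹) hnorm
  rw [fractionalIntegral_const_mul _ h hNinv,
    eLpNorm'_const_mul_ennreal hq hNinv] at hle
  rwa [mul_comm (hlsConst p q), ← ENNReal.inv_mul_le_iff hzero htop]

/-! ### The Schrödinger propagator -/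

/-- The modulus of the prefactor of the Schrödinger kernel once the Bessel function is written
through `besselEntire`. -/
noncomputable def kernelAmplitude (a t : ℝ) : ℝ := 2 ^ (-a) * |t| ^ (-(a + 1) / 2)

/-- The Schrödinger kernel as a unimodular multiple of a Hankel kernel, in the argument order
`a t x y`. Unlike `Skernel` it makes sense for all real `x`, `y`; it vanishes at `t = 0`. -/
noncomputable def propagatorKernel (a t x y : ℝ) : ℂ :=
  (kernelAmplitude a t * besselEntire ((a - 1) / 2) (1 / (16 * t ^ 2) * x ^ 2 * y ^ 2) : ℝ) *
    Complex.exp (((x ^ 2 + y ^ 2) / (4 * t) - Real.sign t * ((a + 1) * Real.pi / 4) : ℝ) *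
      Complex.I)

lemma kernelAmplitude_nonneg (a t : ℝ) : 0 ≤ kernelAmplitude a t := by
  unfold kernelAmplitude
  positivity

lemma kernelAmplitude_zero {a : ℝ} (ha : a ≠ -1) : kernelAmplitude a 0 = 0 := by
  have : -(a + 1) / 2 ≠ 0 := fun h => ha (by linarith)
  rw [kernelAmplitude, abs_zero, Real.zero_rpow this, mul_zero]

lemma kernelAmplitude_mul_hankelConst {a t : ℝ} (ht : t ≠ 0) :
    kernelAmplitude a t * hankelConst a (1 / (16 * t ^ 2)) = 1 := by
  have ht' : 0 < |t| := abs_pos.2 ht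
  have hscale : (1 / (16 * t ^ 2) : ℝ) = (4 * |t|) ^ (-2 : ℝ) := by
    rw [Real.rpow_neg (by positivity), Real.rpow_two, mul_pow, sq_abs, one_div]
    norm_num
  have hfour : (4 : ℝ) ^ ((a + 1) / 2) = 2 ^ (a + 1) := by
    rw [show (4 : ℝ) = 2 ^ (2 : ℝ) by norm_num, ← Real.rpow_mul two_pos.le]
    congr 1
    ring
  calc kernelAmplitude a t * hankelConst a (1 / (16 * t ^ 2))
      = 2 ^ (-a) * |t| ^ (-(a + 1) / 2) * ((4 * |t|) ^ ((a + 1) / 2) / 2) := by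
        rw [kernelAmplitude, hankelConst, hscale, ← Real.rpow_mul (by positivity)]
        ring_nf
    _ = 2 ^ (-a) * 2 ^ (a + 1) * (|t| ^ (-(a + 1) / 2) * |t| ^ ((a + 1) / 2)) / 2 := by
        rw [Real.mul_rpow (by norm_num) ht'.le, hfour]
        ring
    _ = 1 := by
        rw [← Real.rpow_add two_pos, ← Real.rpow_add ht',
          show -(a + 1) / 2 + (a + 1) / 2 = 0 by ring, neg_add_cancel_left, Real.rpow_zero,
          Real.rpow_one]
        norm_num

lemma rpow_mul_rpow_mul_besselJ {a x y t : ℝ} (hx : 0 < x) (hy : 0 < y) (ht : t ≠ 0) :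
    (((2 * |t|) ^ (-(a + 1) / 2) : ℝ) : ℂ) * (((x * y / (2 * |t|)) ^ ((1 - a) / 2) : ℝ) : ℂ) *
        besselJ (((a - 1) / 2 : ℝ) : ℂ) (x * y / (2 * |t|)) =
      (kernelAmplitude a t *
        besselEntire ((a - 1) / 2) (1 / (16 * t ^ 2) * x ^ 2 * y ^ 2) : ℝ) := by
  have ht' : 0 < |t| := abs_pos.2 ht
  have hz : 0 < x * y / (2 * |t|) := by positivity
  have harg : (x * y / (2 * |t|)) ^ 2 / 4 = 1 / (16 * t ^ 2) * x ^ 2 * y ^ 2 := by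
    rw [← sq_abs t]
    field_simp
    norm_num
  rw [besselJ_eq_besselEntire _ hz, harg]
  generalize x * y / (2 * |t|) = z at hz
  have hpow : z ^ ((1 - a) / 2) * (z / 2) ^ ((a - 1) / 2) = 2 ^ ((1 - a) / 2) := by
    rw [show (1 - a) / 2 = -((a - 1) / 2) by ring, Real.div_rpow hz.le two_pos.le,
      Real.rpow_neg hz.le, Real.rpow_neg two_pos.le]
    field_simp
  have hamp : kernelAmplitude a t = (2 * |t|) ^ (-(a + 1) / 2) * 2 ^ ((1 - a) / 2) := by
    rw [kernelAmplitude, Real.mul_rpow two_pos.le ht'.le, mul_right_comm, ← Real.rpow_add two_pos]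
    congr 2
    ring
  rw [hamp, ← hpow]
  push_cast
  ring

theorem Skernel_eq_propagatorKernel {a x y : ℝ} (ha : a ≠ -1) (hx : 0 < x) (hy : 0 < y) (t : ℝ) :
    Skernel a x y t = propagatorKernel a t x y := by
  rcases eq_or_ne t 0 with rfl | ht
  · have : -(a + 1) / 2 ≠ 0 := fun h => ha (by linarith)
    simp only [propagatorKernel, kernelAmplitude_zero ha, Skernel, lt_irrefl, if_false, abs_zero,
      mul_zero, zero_mul, Real.zero_rpow this, Complex.ofReal_zero]
  have hmid := rpow_mul_rpow_mul_besselJ (a := a) hx hy ht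
  rw [propagatorKernel, ← hmid, Skernel]
  split_ifs with hpos
  · rw [mul_assoc (Complex.exp _), mul_assoc (Complex.exp _), mul_comm (Complex.exp _), mul_assoc,
      ← Complex.exp_add, Real.sign_of_pos hpos, abs_of_pos hpos]
    congr 2
    push_cast
    ring
  · have hneg : t < 0 := lt_of_le_of_ne (not_lt.1 hpos) ht
    rw [mul_assoc (Complex.exp _), mul_assoc (Complex.exp _), mul_comm (Complex.exp _), mul_assoc,
      ← Complex.exp_add, Real.sign_of_neg hneg, abs_of_neg hneg]
    congr 2
    push_cast
    ring

lemma measurable_propagatorKernel (a : ℝ) :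
    Measurable fun z : ℝ × ℝ × ℝ => propagatorKernel a z.1 z.2.1 z.2.2 := by
  have hsign : Measurable Real.sign :=
    Measurable.ite measurableSet_Iio measurable_const
      (Measurable.ite measurableSet_Ioi measurable_const measurable_const)
  have hbessel : Measurable (besselEntire ((a - 1) / 2)) :=
    (continuous_besselEntire _).measurable
  unfold propagatorKernel kernelAmplitude
  fun_prop

lemma norm_propagatorKernel_le {a : ℝ} (ha : 0 ≤ a) (t x y : ℝ) :
    ‖propagatorKernel a t x y‖ ≤ kernelAmplitude a t * besselEntire ((a - 1) / 2) 0 := by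
  rw [propagatorKernel, norm_mul, Complex.norm_exp_ofReal_mul_I, mul_one, Complex.norm_real,
    norm_mul, Real.norm_of_nonneg (kernelAmplitude_nonneg a t), Real.norm_eq_abs]
  exact mul_le_mul_of_nonneg_left (abs_besselEntire_le (by linarith) (by positivity))
    (kernelAmplitude_nonneg a t)

lemma integral_propagatorKernel_mul (a t x : ℝ) (g : ℝ → ℂ) :
    ∫ y, propagatorKernel a t x y * g y ∂weightMeasure a =
      Complex.exp ((x ^ 2 / (4 * t) - Real.sign t * ((a + 1) * Real.pi / 4) : ℝ) * Complex.I) *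
        kernelAmplitude a t *
        hankel a (1 / (16 * t ^ 2))
          (fun y => Complex.exp ((y ^ 2 / (4 * t) : ℝ) * Complex.I) * g y) x := by
  rw [hankel, ← integral_const_mul]
  refine integral_congr_ae (.of_forall fun y => ?_)
  have hphase : Complex.exp (((x ^ 2 + y ^ 2) / (4 * t) -
        Real.sign t * ((a + 1) * Real.pi / 4) : ℝ) * Complex.I) =
      Complex.exp ((x ^ 2 / (4 * t) - Real.sign t * ((a + 1) * Real.pi / 4) : ℝ) * Complex.I) *
        Complex.exp ((y ^ 2 / (4 * t) : ℝ) * Complex.I) := by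
    rw [← Complex.exp_add]
    congr 1
    push_cast
    ring
  simp only [propagatorKernel, hphase, Complex.real_smul, Complex.ofReal_mul]
  ring

theorem eLpNorm_integral_propagatorKernel_le {a t : ℝ} (ha : 0 ≤ a) (ht : t ≠ 0) {g : ℝ → ℂ}
    (hg : Integrable g (weightMeasure a)) :
    eLpNorm (fun x => ∫ y, propagatorKernel a t x y * g y ∂weightMeasure a) 2 (weightMeasure a) ≤
      eLpNorm g 2 (weightMeasure a) := by
  by_cases hfin : eLpNorm g 2 (weightMeasure a) = ∞
  · exact hfin ▸ le_top
  set G : ℝ → ℂ := fun y => Complex.exp ((y ^ 2 / (4 * t) : ℝ) * Complex.I) * g y with hG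
  have hGnorm : ∀ y, ‖G y‖ = ‖g y‖ := fun y => by
    rw [hG, norm_mul, Complex.norm_exp_ofReal_mul_I, one_mul]
  have hGmeas : AEStronglyMeasurable G (weightMeasure a) :=
    (Continuous.aestronglyMeasurable (by fun_prop)).mul hg.aestronglyMeasurable
  have hG1 : Integrable G (weightMeasure a) :=
    hg.congr' hGmeas (.of_forall fun y => (hGnorm y).symm)
  have hGeLp : eLpNorm G 2 (weightMeasure a) = eLpNorm g 2 (weightMeasure a) :=
    eLpNorm_congr_norm_ae (.of_forall hGnorm)
  have hG2 : MemLp G 2 (weightMeasure a) := ⟨hGmeas, by rwa [hGeLp, lt_top_iff_ne_top]⟩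
  calc eLpNorm (fun x => ∫ y, propagatorKernel a t x y * g y ∂weightMeasure a) 2 (weightMeasure a)
      = eLpNorm (kernelAmplitude a t • hankel a (1 / (16 * t ^ 2)) G) 2 (weightMeasure a) := by
        refine eLpNorm_congr_norm_ae (.of_forall fun x => ?_)
        rw [integral_propagatorKernel_mul, norm_mul, norm_mul, Complex.norm_exp_ofReal_mul_I,
          one_mul, Complex.norm_real, Pi.smul_apply, norm_smul]
    _ = ENNReal.ofReal (kernelAmplitude a t) *
          eLpNorm (hankel a (1 / (16 * t ^ 2)) G) 2 (weightMeasure a) := by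
        rw [eLpNorm_const_smul, Real.enorm_of_nonneg (kernelAmplitude_nonneg a t)]
    _ ≤ ENNReal.ofReal (kernelAmplitude a t) * (ENNReal.ofReal (hankelConst a (1 / (16 * t ^ 2))) *
          eLpNorm G 2 (weightMeasure a)) := by
        gcongr
        exact eLpNorm_hankel_le ha (by positivity) hG1 hG2
    _ = eLpNorm g 2 (weightMeasure a) := by
        rw [← mul_assoc, ← ENNReal.ofReal_mul (kernelAmplitude_nonneg a t),
          kernelAmplitude_mul_hankelConst ht, ENNReal.ofReal_one, one_mul, hGeLp]

/-- The constant of the dispersive `L^{r'}_a → L^r_a` estimate for the Schrödinger propagator. -/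
noncomputable def dispersiveConst (a r : ℝ) : ℝ≥0∞ :=
  interpolationConst r *
    ENNReal.ofReal ((2 ^ (-a) * besselEntire ((a - 1) / 2) 0) ^ (1 - 2 / r))

lemma dispersiveConst_ne_top {a r : ℝ} (hr : 2 < r) : dispersiveConst a r ≠ ∞ :=
  ENNReal.mul_ne_top (interpolationConst_ne_top hr) ENNReal.ofReal_ne_top

theorem eLpNorm'_integral_propagatorKernel_le {a r t : ℝ} (ha : 0 ≤ a) (hr : 2 < r) (ht : t ≠ 0)
    {f : ℝ → ℂ} (hf : StronglyMeasurable f) (hfi : Integrable f (weightMeasure a))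
    (hfin : eLpNorm' f (r / (r - 1)) (weightMeasure a) ≠ ∞) :
    eLpNorm' (fun x => ∫ y, propagatorKernel a t x y * f y ∂weightMeasure a) r (weightMeasure a) ≤
      dispersiveConst a r * (ENNReal.ofReal (|t| ^ (-((a + 1) * (1 / 2 - 1 / r)))) *
        eLpNorm' f (r / (r - 1)) (weightMeasure a)) := by
  set B := besselEntire ((a - 1) / 2) 0 with hBdef
  have hB : 0 ≤ B := (abs_nonneg _).trans (abs_besselEntire_le (by linarith) le_rfl)
  have hθ : 0 ≤ 1 - 2 / r := by
    rw [sub_nonneg, div_le_one (by linarith)]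
    exact hr.le
  have hmeas : StronglyMeasurable (Function.uncurry (propagatorKernel a t)) :=
    ((measurable_propagatorKernel a).comp measurable_prodMk_left).stronglyMeasurable
  have hsup (x y : ℝ) : ‖propagatorKernel a t x y‖ₑ ≤ (kernelAmplitude a t * B).toNNReal := by
    rw [← ofReal_norm]
    exact ENNReal.ofReal_le_ofReal (norm_propagatorKernel_le ha t x y)
  have hA : ((kernelAmplitude a t * B).toNNReal : ℝ≥0∞) ^ (1 - 2 / r) =
      ENNReal.ofReal ((2 ^ (-a) * B) ^ (1 - 2 / r)) *
        ENNReal.ofReal (|t| ^ (-((a + 1) * (1 / 2 - 1 / r)))) := by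
    change ENNReal.ofReal _ ^ _ = _
    rw [ENNReal.ofReal_rpow_of_nonneg (mul_nonneg (kernelAmplitude_nonneg a t) hB) hθ,
      ← ENNReal.ofReal_mul (by positivity), kernelAmplitude, mul_right_comm,
      Real.mul_rpow (by positivity) (by positivity), ← Real.rpow_mul (abs_nonneg t)]
    congr 3
    ring
  refine (eLpNorm'_integral_kernel_le hmeas hsup ENNReal.one_ne_top (fun g _ hg => ?_) hf hfi hr
    hfin).trans (le_of_eq ?_)
  · rw [one_mul]
    exact eLpNorm_integral_propagatorKernel_le ha ht hg
  · rw [ENNReal.one_rpow, mul_one, hA, dispersiveConst, ← hBdef]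
    simp only [mul_assoc]

/-! ### Mixed norms -/

/-- The mixed norm `mixedNorm` with values in `[0, ∞]`, which is infinite rather than zero when an
integral diverges. -/
noncomputable def eMixedNorm (a q r : ℝ) (u : ℝ → ℝ → ℂ) : ℝ≥0∞ :=
  eLpNorm' (fun t => eLpNorm' (fun x => u x t) r (weightMeasure a)) q volume

lemma eMixedNorm_congr_ae {a q r : ℝ} {u v : ℝ → ℝ → ℂ}
    (h : ∀ᵐ t, ∀ᵐ x ∂weightMeasure a, u x t = v x t) : eMixedNorm a q r u = eMixedNorm a q r v :=
  eLpNorm'_congr_ae (h.mono fun _ ht => eLpNorm'_congr_ae ht)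

lemma LrA_eq_integral_weightMeasure (a r : ℝ) (f : ℝ → ℂ) :
    LrA a r f = (∫ x, ‖f x‖ ^ r ∂weightMeasure a) ^ (1 / r) := by
  rw [LrA, integral_weightMeasure]
  simp only [smul_eq_mul, mul_comm]

lemma LrA_nonneg (a r : ℝ) (f : ℝ → ℂ) : 0 ≤ LrA a r f := by
  rw [LrA_eq_integral_weightMeasure]
  exact Real.rpow_nonneg (integral_nonneg fun _ => by positivity) _

lemma LrA_congr_ae {a r : ℝ} {f g : ℝ → ℂ} (h : f =ᵐ[weightMeasure a] g) :
    LrA a r f = LrA a r g := by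
  simp only [LrA_eq_integral_weightMeasure]
  rw [integral_congr_ae (h.mono fun x hx => by rw [hx])]

lemma mixedNorm_congr_ae {a q r : ℝ} {u v : ℝ → ℝ → ℂ}
    (h : ∀ᵐ t, ∀ᵐ x ∂weightMeasure a, u x t = v x t) : mixedNorm a q r u = mixedNorm a q r v := by
  rw [mixedNorm, mixedNorm, integral_congr_ae (h.mono fun t ht => by rw [LrA_congr_ae ht])]

lemma ofReal_LrA_le_eLpNorm' {a r : ℝ} (hr : 0 < r) (f : ℝ → ℂ) :
    ENNReal.ofReal (LrA a r f) ≤ eLpNorm' f r (weightMeasure a) := by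
  have hnonneg : 0 ≤ ∫ x, ‖f x‖ ^ r ∂weightMeasure a := integral_nonneg fun _ => by positivity
  rw [LrA_eq_integral_weightMeasure, ← ENNReal.ofReal_rpow_of_nonneg hnonneg (by positivity),
    ← Real.enorm_of_nonneg hnonneg, eLpNorm']
  gcongr
  refine (enorm_integral_le_lintegral_enorm _).trans (lintegral_mono fun x => le_of_eq ?_)
  rw [Real.enorm_of_nonneg (by positivity), ← ENNReal.ofReal_rpow_of_nonneg (norm_nonneg _) hr.le,
    ofReal_norm]

theorem ofReal_mixedNorm_le_eMixedNorm {a q r : ℝ} (hq : 0 < q) (hr : 0 < r) (u : ℝ → ℝ → ℂ) :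
    ENNReal.ofReal (mixedNorm a q r u) ≤ eMixedNorm a q r u := by
  have hpow : ∀ t, 0 ≤ LrA a r (fun x => u x t) ^ q := fun t =>
    Real.rpow_nonneg (LrA_nonneg _ _ _) _
  have hnonneg : 0 ≤ ∫ t, LrA a r (fun x => u x t) ^ q := integral_nonneg hpow
  rw [mixedNorm, ← ENNReal.ofReal_rpow_of_nonneg hnonneg (by positivity),
    ← Real.enorm_of_nonneg hnonneg, eMixedNorm, eLpNorm']
  gcongr
  refine (enorm_integral_le_lintegral_enorm _).trans (lintegral_mono fun t => ?_)
  rw [Real.enorm_of_nonneg (hpow t), ← ENNReal.ofReal_rpow_of_nonneg (LrA_nonneg _ _ _) hq.le,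
    enorm_eq_self]
  gcongr
  exact ofReal_LrA_le_eLpNorm' hr _

lemma LrA_eq_toReal_eLpNorm' {a r : ℝ} (hr : 0 < r) {f : ℝ → ℂ}
    (hf : AEStronglyMeasurable f (weightMeasure a)) :
    LrA a r f = (eLpNorm' f r (weightMeasure a)).toReal := by
  rw [LrA_eq_integral_weightMeasure, eLpNorm', ← ENNReal.toReal_rpow,
    integral_eq_lintegral_of_nonneg_ae (.of_forall fun x => by positivity)
      (hf.norm.aemeasurable.pow_const r).aestronglyMeasurable]
  simp only [← ENNReal.ofReal_rpow_of_nonneg (norm_nonneg _) hr.le, ofReal_norm]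

lemma measurable_eLpNorm'_slice (a r : ℝ) {u : ℝ → ℝ → ℂ}
    (hu : Measurable (Function.uncurry u)) :
    Measurable fun t => eLpNorm' (fun x => u x t) r (weightMeasure a) :=
  (hu.enorm.pow_const r).lintegral_prod_left'.pow_const _

lemma ae_lt_top_of_eLpNorm'_ne_top {X : Type*} [MeasurableSpace X] {μ : Measure X} {p : ℝ}
    (hp : 0 < p) {g : X → ℝ≥0∞} (hg : AEMeasurable g μ) (h : eLpNorm' g p μ ≠ ∞) :
    ∀ᵐ x ∂μ, g x < ∞ := by
  have hfin : ∫⁻ x, g x ^ p ∂μ ≠ ∞ :=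
    (lintegral_rpow_enorm_lt_top_of_eLpNorm'_lt_top hp h.lt_top).ne
  filter_upwards [ae_lt_top' (hg.pow_const p) hfin] with x hx
  exact (ENNReal.rpow_lt_top_iff_of_pos hp).1 hx

lemma exists_measurable_ae_eq {a : ℝ} {u : ℝ → ℝ → ℂ}
    (hu : AEStronglyMeasurable (Function.uncurry u) ((weightMeasure a).prod volume)) :
    ∃ v : ℝ → ℝ → ℂ, Measurable (Function.uncurry v) ∧
      ∀ᵐ t, ∀ᵐ x ∂weightMeasure a, u x t = v x t :=
  ⟨Function.curry (hu.mk _), hu.stronglyMeasurable_mk.measurable,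
    Measure.ae_ae_of_ae_prod (Measure.measurePreserving_swap.quasiMeasurePreserving.ae hu.ae_eq_mk)⟩

theorem mixedNorm_eq_toReal_eMixedNorm {a q r : ℝ} (hq : 0 < q) (hr : 0 < r) {u : ℝ → ℝ → ℂ}
    (hu : AEStronglyMeasurable (Function.uncurry u) ((weightMeasure a).prod volume))
    (hfin : eMixedNorm a q r u ≠ ∞) :
    mixedNorm a q r u = (eMixedNorm a q r u).toReal := by
  obtain ⟨v, hv, huv⟩ := exists_measurable_ae_eq hu
  rw [eMixedNorm_congr_ae huv] at hfin
  rw [mixedNorm_congr_ae huv, eMixedNorm_congr_ae huv]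
  have hslice : ∀ t, LrA a r (fun x => v x t) =
      (eLpNorm' (fun x => v x t) r (weightMeasure a)).toReal := fun t =>
    LrA_eq_toReal_eLpNorm' hr (hv.comp measurable_prodMk_right).aestronglyMeasurable
  have hmeas := measurable_eLpNorm'_slice a r hv
  rw [mixedNorm, eMixedNorm, eLpNorm']
  simp only [hslice, enorm_eq_self, ENNReal.toReal_rpow]
  rw [integral_toReal (hmeas.pow_const q).aemeasurable, ENNReal.toReal_rpow]
  filter_upwards [ae_lt_top_of_eLpNorm'_ne_top hq hmeas.aemeasurable hfin] with t ht
  exact ENNReal.rpow_lt_top_of_nonneg hq.le ht.ne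

/-! ### The Strichartz estimate -/

lemma one_lt_div_sub_one {p : ℝ} (hp : 1 < p) : 1 < p / (p - 1) := by
  rw [one_lt_div (by linarith)]
  linarith

lemma div_sub_one_lt_self {p : ℝ} (hp : 2 < p) : p / (p - 1) < p := by
  rw [div_lt_iff₀ (by linarith)]
  nlinarith

lemma Admissible.two_lt {a q r : ℝ} (ha : 0 ≤ a) (h : Admissible a q r) : 2 < q := by
  obtain ⟨hr, hra, hqr⟩ := h
  have : 0 < r := by linarith
  have hlt : (a + 1) * (r - 2) < 2 * r := by
    rcases le_or_gt a 1 with h1 | h1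
    · nlinarith
    · have := hra h1
      rw [lt_div_iff₀ (by linarith)] at this
      nlinarith
  have hscale : 2 / q = (a + 1) * (r - 2) / (2 * r) := by
    rw [hqr]
    field_simp
  have hpos : 0 < 2 / q := by
    have : 0 < r - 2 := by linarith
    rw [hscale]
    positivity
  have hq : 0 < q := (div_pos_iff_of_pos_left two_pos).1 hpos
  rwa [← div_lt_one hq, hscale, div_lt_one (by positivity)]

/-- The operator `T_a^⋆T_a`, the space-time superposition of Schrödinger propagators, written with
`propagatorKernel` so that it is defined on the whole line. -/
noncomputable def TstarT (a : ℝ) (F : ℝ → ℝ → ℂ) (x t : ℝ) : ℂ :=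
  ∫ τ, ∫ y, propagatorKernel a (t - τ) x y * F y τ ∂weightMeasure a

lemma integral_Skernel_eq_TstarT {a x : ℝ} (ha : a ≠ -1) (hx : 0 < x) (F : ℝ → ℝ → ℂ) (t : ℝ) :
    ∫ τ : ℝ, ∫ y in Ioi (0 : ℝ), Skernel a x y (t - τ) * F y τ * ((y ^ a : ℝ) : ℂ) =
      TstarT a F x t := by
  refine integral_congr_ae (.of_forall fun τ => ?_)
  simp only [integral_weightMeasure]
  refine setIntegral_congr_fun measurableSet_Ioi fun y hy => ?_
  simp only [Skernel_eq_propagatorKernel ha hx hy, Complex.real_smul]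
  ring

lemma TstarT_congr_ae {a : ℝ} {F G : ℝ → ℝ → ℂ}
    (h : ∀ᵐ τ, ∀ᵐ y ∂weightMeasure a, F y τ = G y τ) : TstarT a F = TstarT a G := by
  ext x t
  refine integral_congr_ae (h.mono fun τ hτ => integral_congr_ae (hτ.mono fun y hy => ?_))
  simp only [hy]

lemma measurable_enorm_integral_propagatorKernel (a t : ℝ) {F : ℝ → ℝ → ℂ}
    (hF : Measurable (Function.uncurry F)) :
    Measurable (Function.uncurry fun x τ =>
      ‖∫ y, propagatorKernel a (t - τ) x y * F y τ ∂weightMeasure a‖ₑ) := by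
  have : Measurable fun z : (ℝ × ℝ) × ℝ => propagatorKernel a (t - z.1.2) z.1.1 z.2 * F z.2 z.1.2 :=
    ((measurable_propagatorKernel a).comp
      (by fun_prop : Measurable fun z : (ℝ × ℝ) × ℝ => (t - z.1.2, z.1.1, z.2))).mul
      (hF.comp (by fun_prop : Measurable fun z : (ℝ × ℝ) × ℝ => (z.2, z.1.2)))
  exact this.stronglyMeasurable.integral_prod_right'.enorm

theorem eLpNorm'_TstarT_le {a r : ℝ} (ha : 0 ≤ a) (hr : 2 < r) {F : ℝ → ℝ → ℂ}
    (hF : Measurable (Function.uncurry F))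
    (hFi : ∀ᵐ τ, Integrable (fun y => F y τ) (weightMeasure a))
    (hfin : ∀ᵐ τ, eLpNorm' (fun y => F y τ) (r / (r - 1)) (weightMeasure a) < ∞) (t : ℝ) :
    eLpNorm' (fun x => TstarT a F x t) r (weightMeasure a) ≤
      dispersiveConst a r * fractionalIntegral ((a + 1) * (1 / 2 - 1 / r))
        (fun τ => eLpNorm' (fun y => F y τ) (r / (r - 1)) (weightMeasure a)) t := by
  have hne : ∀ᵐ τ : ℝ, τ ≠ t := compl_mem_ae_iff.2 (measure_singleton t)
  calc eLpNorm' (fun x => TstarT a F x t) r (weightMeasure a)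
      ≤ eLpNorm' (fun x => ∫⁻ τ, ‖∫ y, propagatorKernel a (t - τ) x y * F y τ
          ∂weightMeasure a‖ₑ) r (weightMeasure a) :=
        eLpNorm'_mono_enorm_ae (by linarith)
          (.of_forall fun x => enorm_integral_le_lintegral_enorm _)
    _ ≤ ∫⁻ τ, eLpNorm' (fun x => ∫ y, propagatorKernel a (t - τ) x y * F y τ
          ∂weightMeasure a) r (weightMeasure a) :=
        eLpNorm'_lintegral_le (measurable_enorm_integral_propagatorKernel a t hF) (by linarith)
    _ ≤ ∫⁻ τ, dispersiveConst a r * (ENNReal.ofReal (|t - τ| ^ (-((a + 1) * (1 / 2 - 1 / r)))) *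
          eLpNorm' (fun y => F y τ) (r / (r - 1)) (weightMeasure a)) := by
        refine lintegral_mono_ae ?_
        filter_upwards [hne, hFi, hfin] with τ hτ hi hf
        exact eLpNorm'_integral_propagatorKernel_le ha hr (sub_ne_zero.2 hτ.symm)
          (hF.comp measurable_prodMk_right).stronglyMeasurable hi hf.ne
    _ = _ := by
        rw [lintegral_const_mul' _ _ (dispersiveConst_ne_top hr), fractionalIntegral]

lemma eMixedNorm_TstarT_le_of_measurable {a q r : ℝ} (ha : 0 ≤ a) (h : Admissible a q r)
    {F : ℝ → ℝ → ℂ} (hF : Measurable (Function.uncurry F))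
    (hFi : ∀ᵐ τ, Integrable (fun y => F y τ) (weightMeasure a))
    (hfin : eMixedNorm a (q / (q - 1)) (r / (r - 1)) F ≠ ∞) :
    eMixedNorm a q r (TstarT a F) ≤
      dispersiveConst a r * hlsConst (q / (q - 1)) q *
        eMixedNorm a (q / (q - 1)) (r / (r - 1)) F := by
  have hq := h.two_lt ha
  obtain ⟨hr, -, hqr⟩ := h
  have hq' : 1 < q / (q - 1) := one_lt_div_sub_one (by linarith)
  have hα : (a + 1) * (1 / 2 - 1 / r) = 1 - 1 / (q / (q - 1)) + 1 / q := by
    rw [← hqr]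
    have : q - 1 ≠ 0 := by linarith
    field_simp
    ring
  have hN := measurable_eLpNorm'_slice a (r / (r - 1)) hF
  have hNfin := ae_lt_top_of_eLpNorm'_ne_top (by linarith) hN.aemeasurable hfin
  set N := fun τ => eLpNorm' (fun y => F y τ) (r / (r - 1)) (weightMeasure a)
  calc eMixedNorm a q r (TstarT a F)
      ≤ eLpNorm' (fun t => dispersiveConst a r *
          fractionalIntegral ((a + 1) * (1 / 2 - 1 / r)) N t) q volume :=
        eLpNorm'_mono_enorm_ae (by linarith)
          (.of_forall fun t => eLpNorm'_TstarT_le ha hr hF hFi hNfin t)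
    _ = dispersiveConst a r *
          eLpNorm' (fractionalIntegral (1 - 1 / (q / (q - 1)) + 1 / q) N) q volume := by
        rw [eLpNorm'_const_mul_ennreal (by linarith) (dispersiveConst_ne_top hr), hα]
    _ ≤ dispersiveConst a r * (hlsConst (q / (q - 1)) q * eLpNorm' N (q / (q - 1)) volume) := by
        gcongr
        exact eLpNorm'_fractionalIntegral_le hq' (div_sub_one_lt_self hq) hN
    _ = _ := by rw [← mul_assoc, eMixedNorm]

theorem eMixedNorm_TstarT_le {a q r : ℝ} (ha : 0 ≤ a) (h : Admissible a q r) {F : ℝ → ℝ → ℂ}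
    (hF : AEStronglyMeasurable (Function.uncurry F) ((weightMeasure a).prod volume))
    (hFi : ∀ᵐ τ, Integrable (fun y => F y τ) (weightMeasure a))
    (hfin : eMixedNorm a (q / (q - 1)) (r / (r - 1)) F ≠ ∞) :
    eMixedNorm a q r (TstarT a F) ≤
      dispersiveConst a r * hlsConst (q / (q - 1)) q *
        eMixedNorm a (q / (q - 1)) (r / (r - 1)) F := by
  obtain ⟨G, hG, hFG⟩ := exists_measurable_ae_eq hF
  have hGi : ∀ᵐ τ, Integrable (fun y => G y τ) (weightMeasure a) := by
    filter_upwards [hFi, hFG] with τ hi hτ using hi.congr hτ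
  rw [eMixedNorm_congr_ae hFG] at hfin ⊢
  rw [TstarT_congr_ae hFG]
  exact eMixedNorm_TstarT_le_of_measurable ha h hG hGi hfin

/-! ### The test functions `𝕊⁺` -/

/-- A spatial decay rate of functions in `𝕊⁺`, with the exponent chosen so that
`x^a * decayWeight a x ≤ (1 + x²)⁻¹`. -/
noncomputable def decayWeight (a x : ℝ) : ℝ := (1 + x ^ 2) ^ (-((a + 2) / 2))

lemma decayWeight_nonneg (a x : ℝ) : 0 ≤ decayWeight a x := by
  unfold decayWeight
  positivity

lemma decayWeight_le_one {a : ℝ} (ha : 0 ≤ a) (x : ℝ) : decayWeight a x ≤ 1 :=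
  Real.rpow_le_one_of_one_le_of_nonpos (by linarith [sq_nonneg x]) (by linarith)

lemma integrable_decayWeight {a : ℝ} (ha : 0 ≤ a) :
    Integrable (decayWeight a) (weightMeasure a) := by
  rw [integrable_weightMeasure_iff]
  refine (integrable_inv_one_add_sq.integrableOn (s := Ioi 0)).mono'
    (Measurable.aestronglyMeasurable (by unfold decayWeight; fun_prop)) ?_
  refine (ae_restrict_mem measurableSet_Ioi).mono fun x (hx : 0 < x) => ?_
  have hpow : x ^ a ≤ (1 + x ^ 2) ^ (a / 2) := by
    calc x ^ a = (x ^ 2) ^ (a / 2) := by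
          rw [← Real.rpow_two, ← Real.rpow_mul hx.le, mul_div_cancel₀ a two_ne_zero]
      _ ≤ (1 + x ^ 2) ^ (a / 2) :=
          Real.rpow_le_rpow (by positivity) (by linarith) (by positivity)
  rw [smul_eq_mul, Real.norm_of_nonneg (mul_nonneg (by positivity) (decayWeight_nonneg a x))]
  calc x ^ a * decayWeight a x
      ≤ (1 + x ^ 2) ^ (a / 2) * (1 + x ^ 2) ^ (-((a + 2) / 2)) := by
        unfold decayWeight
        gcongr
    _ = (1 + x ^ 2)⁻¹ := by
        rw [← Real.rpow_add (by positivity), ← Real.rpow_neg_one]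
        ring_nf

lemma eLpNorm'_ne_top_of_norm_le_one {X E : Type*} [MeasurableSpace X] [NormedAddCommGroup E]
    {μ : Measure X} {f : X → E} (hf : Integrable f μ) (hf1 : ∀ x, ‖f x‖ ≤ 1) {r : ℝ}
    (hr : 1 ≤ r) : eLpNorm' f r μ ≠ ∞ := by
  refine ENNReal.rpow_ne_top_of_nonneg (by positivity) (ne_top_of_le_ne_top hf.2.ne
    (lintegral_mono fun x => ?_))
  have hx : ‖f x‖ₑ ≤ 1 := by
    rw [← ofReal_norm]
    exact ENNReal.ofReal_le_one.2 (hf1 x)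
  simpa only [ENNReal.rpow_one] using ENNReal.rpow_le_rpow_of_exponent_ge hx hr

lemma rpow_mul_le_one_add_rpow {s x t : ℝ} (hs : 1 ≤ s) :
    (1 + x ^ 2) ^ s * (1 + t ^ 2) ≤ (1 + x ^ 2 + t ^ 2) ^ (2 * s) := by
  have hx := sq_nonneg x
  have ht := sq_nonneg t
  calc (1 + x ^ 2) ^ s * (1 + t ^ 2)
      ≤ (1 + x ^ 2 + t ^ 2) ^ s * (1 + x ^ 2 + t ^ 2) ^ s := by
        gcongr ?_ * ?_
        · exact Real.rpow_le_rpow (by positivity) (by linarith) (by linarith)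
        · exact le_trans (by linarith) (Real.self_le_rpow_of_one_le (by linarith) hs)
    _ = (1 + x ^ 2 + t ^ 2) ^ (2 * s) := by
        rw [← Real.rpow_add (by positivity), two_mul]

namespace SPlusT

variable {F : ℝ → ℝ → ℂ} {a : ℝ}

lemma exists_decay (hF : SPlusT F) (ha : 0 ≤ a) :
    ∃ C : ℝ, 0 ≤ C ∧ ∀ x > (0 : ℝ), ∀ t : ℝ, ‖F x t‖ ≤ C * (1 + t ^ 2)⁻¹ * decayWeight a x := by
  obtain ⟨n, hn⟩ := exists_nat_ge (2 * (a + 2))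
  obtain ⟨C, hC⟩ := hF.2 n
  have hbound : ∀ x > (0 : ℝ), ∀ t : ℝ, (1 + x ^ 2 + t ^ 2) ^ ((n : ℝ) / 2) * ‖F x t‖ ≤ C := by
    intro x hx t
    simpa only [DxIter, DtIter, iteratedDeriv_zero] using hC 0 0 (Nat.zero_le _) x hx t
  refine ⟨C, le_trans (by positivity) (hbound 1 one_pos 0), fun x hx t => ?_⟩
  have hweight : (1 + x ^ 2) ^ ((a + 2) / 2) * (1 + t ^ 2) ≤
      (1 + x ^ 2 + t ^ 2) ^ ((n : ℝ) / 2) :=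
    (rpow_mul_le_one_add_rpow (by linarith)).trans
      (Real.rpow_le_rpow_of_exponent_le (by nlinarith [sq_nonneg x, sq_nonneg t]) (by linarith))
  have hmul : (1 + x ^ 2) ^ ((a + 2) / 2) * (1 + t ^ 2) * ‖F x t‖ ≤ C :=
    (mul_le_mul_of_nonneg_right hweight (norm_nonneg _)).trans (hbound x hx t)
  rw [decayWeight, Real.rpow_neg (by positivity), mul_assoc, ← mul_inv, ← div_eq_mul_inv,
    le_div_iff₀ (by positivity)]
  linarith

lemma aestronglyMeasurable (hF : SPlusT F) (a : ℝ) :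
    AEStronglyMeasurable (Function.uncurry F) ((weightMeasure a).prod volume) := by
  have hac : (weightMeasure a).prod (volume : Measure ℝ) ≪
      (volume.prod volume).restrict (Ioi 0 ×ˢ univ) := by
    rw [← Measure.prod_restrict, Measure.restrict_univ]
    exact (withDensity_absolutelyContinuous _ _).prod Measure.AbsolutelyContinuous.rfl
  exact (hF.1.continuousOn.aestronglyMeasurable
    (measurableSet_Ioi.prod MeasurableSet.univ)).mono_ac hac

lemma integrable_slice (hF : SPlusT F) (ha : 0 ≤ a) (t : ℝ) :
    Integrable (fun x => F x t) (weightMeasure a) := by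
  obtain ⟨C, -, hC⟩ := hF.exists_decay ha
  have hcont : ContinuousOn (fun x => F x t) (Ioi 0) :=
    hF.1.continuousOn.comp (f := fun x : ℝ => (x, t)) (by fun_prop) fun x hx => ⟨hx, mem_univ t⟩
  exact ((integrable_decayWeight ha).const_mul _).mono'
    ((hcont.aestronglyMeasurable measurableSet_Ioi).mono_ac (withDensity_absolutelyContinuous _ _))
    ((ae_weightMeasure_pos a).mono fun x hx => hC x hx t)

lemma eMixedNorm_ne_top (hF : SPlusT F) (ha : 0 ≤ a) {q r : ℝ} (hq : 1 ≤ q) (hr : 1 ≤ r) :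
    eMixedNorm a q r F ≠ ∞ := by
  obtain ⟨C, hC0, hC⟩ := hF.exists_decay ha
  set W := eLpNorm' (decayWeight a) r (weightMeasure a)
  have hW : W ≠ ∞ := eLpNorm'_ne_top_of_norm_le_one (integrable_decayWeight ha)
    (fun x => by
      rw [Real.norm_of_nonneg (decayWeight_nonneg a x)]
      exact decayWeight_le_one ha x) hr
  have hV : eLpNorm' (fun t : ℝ => (1 + t ^ 2)⁻¹) q volume ≠ ∞ :=
    eLpNorm'_ne_top_of_norm_le_one integrable_inv_one_add_sq (fun t => by
      rw [Real.norm_of_nonneg (by positivity)]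
      exact inv_le_one_of_one_le₀ (by linarith [sq_nonneg t])) hq
  have hslice : ∀ t : ℝ, eLpNorm' (fun x => F x t) r (weightMeasure a) ≤
      ENNReal.ofReal C * W * ‖(1 + t ^ 2)⁻¹‖ₑ := fun t => by
    calc eLpNorm' (fun x => F x t) r (weightMeasure a)
        ≤ eLpNorm' (fun x => ‖C * (1 + t ^ 2)⁻¹‖ₑ * ‖decayWeight a x‖ₑ) r (weightMeasure a) := by
          refine eLpNorm'_mono_enorm_ae (by linarith) ((ae_weightMeasure_pos a).mono fun x hx => ?_)
          rw [enorm_eq_self, ← enorm_mul, ← ofReal_norm (F x t), ← ofReal_norm]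
          exact ENNReal.ofReal_le_ofReal ((hC x hx t).trans (le_abs_self _))
      _ = ‖C * (1 + t ^ 2)⁻¹‖ₑ * W := eLpNorm'_const_mul_ennreal (by linarith) enorm_ne_top _
      _ = ENNReal.ofReal C * W * ‖(1 + t ^ 2)⁻¹‖ₑ := by
          rw [enorm_mul, Real.enorm_of_nonneg hC0, mul_right_comm]
  have hCW : ENNReal.ofReal C * W ≠ ∞ := ENNReal.mul_ne_top ENNReal.ofReal_ne_top hW
  refine ne_top_of_le_ne_top (ENNReal.mul_ne_top hCW hV) ?_
  exact (eLpNorm'_mono_enorm_ae (by linarith) (.of_forall hslice)).trans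
    (eLpNorm'_const_mul_ennreal (by linarith) hCW _).le

end SPlusT

/-- Finiteness is asked of `eMixedNorm` because `mixedNorm` is `0` when an integral diverges. -/
theorem TstarT_estimate_general (a q r : ℝ) (ha : 0 ≤ a) (hadm : Admissible a q r) :
    ∃ C > (0 : ℝ), ∀ F : ℝ → ℝ → ℂ,
      AEStronglyMeasurable (Function.uncurry F) ((weightMeasure a).prod volume) →
      (∀ᵐ τ, Integrable (fun y => F y τ) (weightMeasure a)) →
      eMixedNorm a (q / (q - 1)) (r / (r - 1)) F ≠ ∞ →
      mixedNorm a q r (fun x t =>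
          ∫ τ : ℝ, ∫ y in Ioi (0 : ℝ), Skernel a x y (t - τ) * F y τ * ((y ^ a : ℝ) : ℂ)) ≤
        C * mixedNorm a (q / (q - 1)) (r / (r - 1)) F := by
  have hq : 2 < q := hadm.two_lt ha
  have hr : 2 < r := hadm.1
  have hq' := one_lt_div_sub_one (by linarith : 1 < q)
  have hr' := one_lt_div_sub_one (by linarith : 1 < r)
  set K := dispersiveConst a r * hlsConst (q / (q - 1)) q
  have hK : K ≠ ∞ := ENNReal.mul_ne_top (dispersiveConst_ne_top hr)
    (hlsConst_ne_top hq' (div_sub_one_lt_self hq))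
  refine ⟨K.toReal + 1, by positivity, fun F hF hFi hfin => ?_⟩
  rw [mixedNorm_congr_ae (v := TstarT a F) (.of_forall fun t => (ae_weightMeasure_pos a).mono
      fun x hx => integral_Skernel_eq_TstarT (by linarith) hx F t),
    mixedNorm_eq_toReal_eMixedNorm (by linarith) (by linarith) hF hfin]
  calc mixedNorm a q r (TstarT a F)
      ≤ (K * eMixedNorm a (q / (q - 1)) (r / (r - 1)) F).toReal :=
        (ENNReal.ofReal_le_iff_le_toReal (ENNReal.mul_ne_top hK hfin)).1
          ((ofReal_mixedNorm_le_eMixedNorm (by linarith) (by linarith) _).trans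
            (eMixedNorm_TstarT_le ha hadm hF hFi hfin))
    _ ≤ (K.toReal + 1) * (eMixedNorm a (q / (q - 1)) (r / (r - 1)) F).toReal := by
        rw [ENNReal.toReal_mul]
        gcongr
        linarith

/-- `T_a^⋆T_a` estimate: for `a ≥ 0` and an `a`-admissible pair `(q,r)`,
`‖T_a^⋆T_a(F)‖_{L^q_t L^r_a} ≤ C(a,r) ‖F‖_{L^{q'}_t L^{r'}_a}` for `F ∈ 𝕊⁺`. -/
theorem TstarT_estimate (a q r : ℝ) (ha : 0 ≤ a) (hadm : Admissible a q r) :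
    ∃ C > (0:ℝ), ∀ F : ℝ → ℝ → ℂ, SPlusT F →
      mixedNorm a q r (fun x t =>
          ∫ τ : ℝ, ∫ y in Ioi (0:ℝ), Skernel a x y (t - τ) * F y τ * ((y ^ a : ℝ) : ℂ)) ≤
        C * mixedNorm a (q / (q - 1)) (r / (r - 1)) F := by
  have hq' : 1 ≤ q / (q - 1) := (one_lt_div_sub_one (by linarith [hadm.two_lt ha])).le
  have hr' : 1 ≤ r / (r - 1) := (one_lt_div_sub_one (by linarith [hadm.1])).le
  obtain ⟨C, hC, hest⟩ := TstarT_estimate_general a q r ha hadm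
  exact ⟨C, hC, fun F hF => hest F (hF.aestronglyMeasurable a)
    (.of_forall (hF.integrable_slice ha)) (hF.eMixedNorm_ne_top ha hq' hr')⟩
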